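/- Let s > 3/2 and ε, μ ∈ (0,1]. There is a constant c = c(s), independent of ε, μ and T, such that for every T > 0 and every solution η of the Whitham equation ∂_t η + √T_μ(D) ∂_x η + (ε/2) ∂_x(η²) = 0 on [0,T], with t ↦ η(·,t) a C¹ curve in the Schwartz space 𝓢(ℝ) and η(·,0) = η₀, one has ‖η(t)‖_{H^s}^2 ≤ exp( c ε ∫_0^t ‖∂_x η(τ)‖_{L^∞} dτ ) ‖η₀‖_{H^s}^2 for all t ∈ [0,T]. -/

import Mathlib

noncomputable section

open MeasureTheory SchwartzMap
open scoped FourierTransform ENNReal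

/-- The Japanese bracket `⟨x⟩ = (1 + x²)^{1/2}`. -/
def jap (x : ℝ) : ℝ := (1 + x ^ 2) ^ ((1 : ℝ) / 2)

/-- The symbol `T_μ(ξ) = tanh(√μ |ξ|)/(√μ |ξ|)` for `ξ ≠ 0`, with value `1` at `ξ = 0`. -/
def Tsymb (μ ξ : ℝ) : ℝ :=
  if ξ = 0 then 1 else Real.tanh (Real.sqrt μ * |ξ|) / (Real.sqrt μ * |ξ|)

/-- Complexification of a real-valued function. -/
def cc (f : ℝ → ℝ) : ℝ → ℂ := fun x => (f x : ℂ)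

/-- The multiplier `√T_μ(D)`, `(√T_μ(D) g)^(ξ) = T_μ(ξ)^{1/2} ĝ(ξ)`. -/
def sqrtTmul (μ : ℝ) (g : ℝ → ℂ) : ℝ → ℂ :=
  𝓕⁻ (fun ξ : ℝ => ((Real.sqrt (Tsymb μ ξ) : ℝ) : ℂ) * 𝓕 g ξ)

/-- The `H^s`-norm `‖f‖_{H^s} = ‖⟨ξ⟩^s f̂‖_{L²}` (as an extended nonnegative real). -/
def HsNorm (s : ℝ) (f : ℝ → ℂ) : ℝ≥0∞ :=
  eLpNorm (fun ξ : ℝ => jap ξ ^ s * ‖𝓕 f ξ‖) 2 volume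

/-!
The dispersive multiplier is skew-adjoint, so the energy `∫ ⟨ξ⟩^{2s} |η̂|²` is changed only by the
transport term, which contributes `-2ε ∫ ⟨ξ⟩^{2s} Re (conj η̂ · (η ∂ₓη)^)`. Everything reduces to
bounding `∫ w Re (conj û · (u ∂ₓu)^)` by `C ‖∂ₓu‖_∞ ‖u‖²_{H^s}` for `w = ⟨ξ⟩^{2s}`, followed by
Grönwall's inequality.

No commutator or paraproduct estimate is needed. The multiplier of `(Δ_h^{2n})^* Δ_h^{2n}` is an
explicit power of a sine, and for it the bound is elementary: in the pairing of `Δ_h^{2n} u` with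
`Δ_h^{2n} (u ∂ₓu)` the discrete Leibniz rule isolates `u ∂ₓ Δ_h^{2n} u`, which integrates by parts
to a term with `∂ₓu`, and every other term carries a difference of `u`. Integrating against
`h^{-1-2σ} dh` over `(0, 1]` turns these multipliers into `|ξ|^{2σ}` up to a bounded function, and
the binomial series writes `(1 + ξ²)^s` as a combination of such powers up to a bounded function;
bounded weights are trivial.
-/

open Finset.HasAntidiagonal (antidiagonal mem_antidiagonal)

section ForwardDifference

variable {G R : Type*} [AddCommMonoid G] [CommRing R]

lemma fwdDiff_iter_mul_apply (f g : G → R) (h : G) (n : ℕ) (x : G) :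
    (fwdDiff h)^[n] (f * g) x = ∑ ij ∈ antidiagonal n,
      n.choose ij.1 • ((fwdDiff h)^[ij.1] f x * (fwdDiff h)^[ij.2] g (x + ij.1 • h)) := by
  induction n generalizing x with
  | zero => simp
  | succ n ih =>
    rw [Finset.sum_antidiagonal_choose_succ_nsmul
      (fun i j => (fwdDiff h)^[i] f x * (fwdDiff h)^[j] g (x + i • h)),
      Function.iterate_succ_apply', fwdDiff, ih, ih, ← Finset.sum_sub_distrib,
      ← Finset.sum_add_distrib]
    refine Finset.sum_congr rfl fun ij hij => ?_
    rw [← Nat.choose_symm_of_eq_add (mem_antidiagonal.1 hij).symm, ← smul_sub, ← smul_add]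
    have shift : x + h + ij.1 • h = x + (ij.1 + 1) • h := by rw [succ_nsmul']; abel
    simp only [Function.iterate_succ_apply', fwdDiff, shift]
    rw [succ_nsmul, add_assoc]
    congr 1
    ring

end ForwardDifference

lemma abs_fwdDiff_iter_le {f : ℝ → ℝ} {M : ℝ} (hf : ∀ x, |f x| ≤ M) (h : ℝ) (k : ℕ) (x : ℝ) :
    |(fwdDiff h)^[k] f x| ≤ 2 ^ k * M := by
  induction k generalizing x with
  | zero => simpa using hf x
  | succ k ih =>
    rw [Function.iterate_succ_apply', fwdDiff, pow_succ]
    linarith [abs_sub ((fwdDiff h)^[k] f (x + h)) ((fwdDiff h)^[k] f x), ih x, ih (x + h)]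

lemma abs_fwdDiff_le_of_abs_deriv_le {f : ℝ → ℝ} {M : ℝ} (hf : Differentiable ℝ f)
    (hM : ∀ x, |deriv f x| ≤ M) (h x : ℝ) : |fwdDiff h f x| ≤ M * |h| := by
  simpa [fwdDiff] using Convex.norm_image_sub_le_of_norm_deriv_le (s := Set.univ) (x := x)
    (y := x + h) (fun y _ => hf y) (fun y _ => hM y) convex_univ trivial trivial

lemma abs_fwdDiff_iter_succ_le {f : ℝ → ℝ} {M : ℝ} (hf : Differentiable ℝ f)
    (hM : ∀ x, |deriv f x| ≤ M) (h : ℝ) (k : ℕ) (x : ℝ) :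
    |(fwdDiff h)^[k + 1] f x| ≤ 2 ^ k * (M * |h|) := by
  rw [Function.iterate_succ_apply]
  exact abs_fwdDiff_iter_le (abs_fwdDiff_le_of_abs_deriv_le hf hM h) h k x

lemma abs_integral_mul_le {α : Type*} [MeasurableSpace α] {ν : Measure α} {a b φ : α → ℝ} {K : ℝ}
    (ha : Integrable (fun x => a x ^ 2) ν) (hb : Integrable (fun x => b x ^ 2) ν)
    (hφ : ∀ x, |φ x| ≤ K * |b x|) (hK : 0 ≤ K) :
    |∫ x, a x * φ x ∂ν| ≤ K / 2 * ((∫ x, a x ^ 2 ∂ν) + ∫ x, b x ^ 2 ∂ν) := by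
  rw [← integral_add ha hb, ← integral_const_mul, ← Real.norm_eq_abs]
  refine norm_integral_le_of_norm_le ((ha.add hb).const_mul _) (.of_forall fun x => ?_)
  calc ‖a x * φ x‖ ≤ |a x| * (K * |b x|) := by
        rw [norm_mul]
        exact mul_le_mul_of_nonneg_left (hφ x) (abs_nonneg _)
    _ = K / 2 * (2 * |a x| * |b x|) := by ring
    _ ≤ K / 2 * (a x ^ 2 + b x ^ 2) := by
        rw [← sq_abs (a x), ← sq_abs (b x)]
        gcongr
        exact two_mul_le_add_sq _ _

/-- The pointwise product of real Schwartz functions. -/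
def schwartzMul (u v : 𝓢(ℝ, ℝ)) : 𝓢(ℝ, ℝ) := pairing (ContinuousLinearMap.mul ℝ ℝ) u v

/-- The transport term `u ∂ₓu = ½ ∂ₓ(u²)` of the Whitham equation. -/
def advection (u : 𝓢(ℝ, ℝ)) : 𝓢(ℝ, ℝ) := schwartzMul u (derivCLM ℝ ℝ u)

/-- The forward difference `Δ_h` as an operator on Schwartz functions. -/
def fwdDiffCLM (h : ℝ) : 𝓢(ℝ, ℝ) →L[ℝ] 𝓢(ℝ, ℝ) :=
  compSubConstCLM ℝ (-h) - ContinuousLinearMap.id ℝ 𝓢(ℝ, ℝ)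

/-- The squared `L²` norm of a real Schwartz function. -/
def normSqL2 (u : 𝓢(ℝ, ℝ)) : ℝ := ∫ x, u x ^ 2

lemma coe_schwartzMul (u v : 𝓢(ℝ, ℝ)) : ⇑(schwartzMul u v) = ⇑u * ⇑v := rfl

lemma integrable_mul (u v : 𝓢(ℝ, ℝ)) : Integrable (fun x => u x * v x) :=
  (schwartzMul u v).integrable

lemma integrable_sq (u : 𝓢(ℝ, ℝ)) : Integrable (fun x => u x ^ 2) := by
  simpa only [pow_two] using integrable_mul u u

lemma normSqL2_nonneg (u : 𝓢(ℝ, ℝ)) : 0 ≤ normSqL2 u := integral_nonneg fun x => sq_nonneg (u x)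

lemma coe_fwdDiffCLM (h : ℝ) (u : 𝓢(ℝ, ℝ)) : ⇑(fwdDiffCLM h u) = fwdDiff h ⇑u := by
  ext x
  simp [fwdDiffCLM, fwdDiff]

lemma coe_fwdDiffCLM_pow (h : ℝ) (k : ℕ) (u : 𝓢(ℝ, ℝ)) :
    ⇑((fwdDiffCLM h ^ k) u) = (fwdDiff h)^[k] ⇑u := by
  induction k with
  | zero => rfl
  | succ k ih =>
    rw [pow_succ', mul_apply_eq_comp, coe_fwdDiffCLM, ih, Function.iterate_succ_apply']

lemma derivCLM_fwdDiffCLM (h : ℝ) (u : 𝓢(ℝ, ℝ)) :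
    derivCLM ℝ ℝ (fwdDiffCLM h u) = fwdDiffCLM h (derivCLM ℝ ℝ u) := by
  ext x
  have : HasDerivAt (fwdDiff h ⇑u) (deriv u (x + h) - deriv u x) x :=
    ((u.hasDerivAt (x + h)).comp_add_const x h).sub (u.hasDerivAt x)
  rw [derivCLM_apply, coe_fwdDiffCLM, coe_fwdDiffCLM, this.deriv]
  rfl

lemma derivCLM_fwdDiffCLM_pow (h : ℝ) (k : ℕ) (u : 𝓢(ℝ, ℝ)) :
    derivCLM ℝ ℝ ((fwdDiffCLM h ^ k) u) = (fwdDiffCLM h ^ k) (derivCLM ℝ ℝ u) :=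
  DFunLike.congr_fun (Commute.pow_right
    (show Commute (derivCLM ℝ ℝ) (fwdDiffCLM h) from
      ContinuousLinearMap.ext (derivCLM_fwdDiffCLM h)) k) u

lemma normSqL2_fwdDiffCLM_le (h : ℝ) (u : 𝓢(ℝ, ℝ)) :
    normSqL2 (fwdDiffCLM h u) ≤ 4 * normSqL2 u := by
  have hu := integrable_sq u
  calc normSqL2 (fwdDiffCLM h u) ≤ ∫ x, (2 * u (x + h) ^ 2 + 2 * u x ^ 2) := by
        refine integral_mono (integrable_sq _)
          (((hu.comp_add_right h).const_mul 2).add (hu.const_mul 2)) fun x => ?_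
        simp only [coe_fwdDiffCLM, fwdDiff]
        nlinarith only [sq_nonneg (u (x + h) + u x)]
    _ = 4 * normSqL2 u := by
        rw [integral_add ((hu.comp_add_right h).const_mul 2) (hu.const_mul 2),
          integral_const_mul, integral_const_mul,
          integral_add_right_eq_self (fun x => u x ^ 2) h, normSqL2]
        ring

lemma normSqL2_fwdDiffCLM_pow_le {h : ℝ} {n k : ℕ} (hnk : n ≤ k) (hkn : k ≤ 2 * n)
    (u : 𝓢(ℝ, ℝ)) :
    normSqL2 ((fwdDiffCLM h ^ k) u) ≤ 4 ^ n * normSqL2 ((fwdDiffCLM h ^ n) u) := by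
  have iterate_le (j : ℕ) (v : 𝓢(ℝ, ℝ)) :
      normSqL2 ((fwdDiffCLM h ^ j) v) ≤ 4 ^ j * normSqL2 v := by
    induction j with
    | zero => simp
    | succ j ih =>
      rw [pow_succ', pow_succ', mul_apply_eq_comp]
      linarith [normSqL2_fwdDiffCLM_le h ((fwdDiffCLM h ^ j) v)]
  obtain ⟨j, rfl⟩ := Nat.exists_eq_add_of_le' hnk
  rw [pow_add, mul_apply_eq_comp]
  exact (iterate_le j _).trans (mul_le_mul_of_nonneg_right
    (pow_le_pow_right₀ (by norm_num) (by omega)) (normSqL2_nonneg _))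

lemma integral_mul_mul_deriv (u v : 𝓢(ℝ, ℝ)) :
    ∫ x, v x * (u x * deriv v x) = -(1 / 2) * ∫ x, deriv u x * v x ^ 2 := by
  have parts := integral_mul_deriv_eq_neg_deriv_mul (schwartzMul u v) v
  have product_rule (x : ℝ) :
      deriv (schwartzMul u v) x = deriv u x * v x + u x * deriv v x :=
    ((u.hasDerivAt x).mul (v.hasDerivAt x)).deriv
  have split : ∫ x, deriv (schwartzMul u v) x * v x
      = (∫ x, deriv u x * v x ^ 2) + ∫ x, v x * (u x * deriv v x) := by
    rw [← integral_add]
    · exact integral_congr_ae (.of_forall fun x => by simp only [product_rule]; ring)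
    · simpa [pow_two, coe_schwartzMul] using integrable_mul (derivCLM ℝ ℝ u) (schwartzMul v v)
    · exact integrable_mul v (schwartzMul u (derivCLM ℝ ℝ v))
  rw [split] at parts
  have : ∫ x, schwartzMul u v x * deriv v x = ∫ x, v x * (u x * deriv v x) :=
    integral_congr_ae (.of_forall fun x => by simp only [coe_schwartzMul, Pi.mul_apply]; ring)
  linarith

lemma abs_integral_mul_mul_deriv_le {u : 𝓢(ℝ, ℝ)} {M : ℝ} (hu : ∀ x, |deriv u x| ≤ M)
    (v : 𝓢(ℝ, ℝ)) : |∫ x, v x * (u x * deriv v x)| ≤ M / 2 * normSqL2 v := by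
  have bound : |∫ x, deriv u x * v x ^ 2| ≤ M * normSqL2 v := by
    rw [normSqL2, ← integral_const_mul, ← Real.norm_eq_abs]
    refine norm_integral_le_of_norm_le ((integrable_sq v).const_mul M) (.of_forall fun x => ?_)
    rw [norm_mul, Real.norm_of_nonneg (sq_nonneg (v x))]
    exact mul_le_mul_of_nonneg_right (hu x) (sq_nonneg _)
  rw [integral_mul_mul_deriv, abs_mul, abs_neg, abs_of_pos one_half_pos]
  linarith

section DifferenceEnergy

variable {u : 𝓢(ℝ, ℝ)} {M : ℝ} {n : ℕ}

/-- The difference energy `‖Δ_h^n u‖² + h² ‖Δ_h^n u'‖²` in `L²`. -/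
def diffEnergy (h : ℝ) (n : ℕ) (u : 𝓢(ℝ, ℝ)) : ℝ :=
  normSqL2 ((fwdDiffCLM h ^ n) u) + h ^ 2 * normSqL2 ((fwdDiffCLM h ^ n) (derivCLM ℝ ℝ u))

lemma normSqL2_fwdDiffCLM_pow_le_diffEnergy (h : ℝ) (n : ℕ) (u : 𝓢(ℝ, ℝ)) :
    normSqL2 ((fwdDiffCLM h ^ n) u) ≤ diffEnergy h n u :=
  le_add_of_nonneg_right (mul_nonneg (sq_nonneg h) (normSqL2_nonneg _))

lemma integrable_comp_add_sq (v : 𝓢(ℝ, ℝ)) (c : ℝ) : Integrable (fun x => v (x + c) ^ 2) :=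
  (integrable_sq v).comp_add_right c

lemma abs_integral_diff_mul_le_of_lt (hu : ∀ x, |deriv u x| ≤ M) (h : ℝ) {i j : ℕ}
    (hij : i + 1 + j = 2 * n) (hi : i + 1 ≤ n) :
    |∫ x, (fwdDiffCLM h ^ (2 * n)) u x * ((fwdDiffCLM h ^ (i + 1)) u x *
      (fwdDiffCLM h ^ j) (derivCLM ℝ ℝ u) (x + (i + 1) • h))| ≤ 16 ^ n * M * diffEnergy h n u := by
  set b := (fwdDiffCLM h ^ j) (derivCLM ℝ ℝ u)
  have hM : 0 ≤ M := (abs_nonneg _).trans (hu 0)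
  have factor (x : ℝ) : |(fwdDiffCLM h ^ (i + 1)) u x * b (x + (i + 1) • h)|
      ≤ 2 ^ i * M * |h * b (x + (i + 1) • h)| := by
    rw [abs_mul, abs_mul, coe_fwdDiffCLM_pow h (i + 1) u]
    nlinarith only [mul_le_mul_of_nonneg_right
      (abs_fwdDiff_iter_succ_le u.differentiable hu h i x) (abs_nonneg (b (x + (i + 1) • h)))]
  have integrable_b : Integrable (fun x => (h * b (x + (i + 1) • h)) ^ 2) := by
    simpa only [mul_pow] using (integrable_comp_add_sq b _).const_mul (h ^ 2)
  have integral_b : ∫ x, (h * b (x + (i + 1) • h)) ^ 2 = h ^ 2 * normSqL2 b := by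
    simp only [mul_pow, integral_const_mul]
    rw [integral_add_right_eq_self (fun x => b x ^ 2), normSqL2]
  refine (abs_integral_mul_le (integrable_sq _) integrable_b factor (by positivity)).trans ?_
  rw [integral_b]
  calc 2 ^ i * M / 2 * (normSqL2 ((fwdDiffCLM h ^ (2 * n)) u) + h ^ 2 * normSqL2 b)
      ≤ 4 ^ n * M * (4 ^ n * normSqL2 ((fwdDiffCLM h ^ n) u)
          + h ^ 2 * (4 ^ n * normSqL2 ((fwdDiffCLM h ^ n) (derivCLM ℝ ℝ u)))) := by
        have := normSqL2_nonneg b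
        have := normSqL2_nonneg ((fwdDiffCLM h ^ (2 * n)) u)
        have : (2 : ℝ) ^ i * M / 2 ≤ 4 ^ n * M := by
          have : (2 : ℝ) ^ i ≤ 4 ^ n :=
            (pow_le_pow_left₀ (by norm_num) (by norm_num) i).trans
              (pow_le_pow_right₀ (by norm_num) (by omega))
          nlinarith [mul_le_mul_of_nonneg_right this hM, mul_nonneg (pow_nonneg zero_le_four n) hM]
        gcongr
        · exact normSqL2_fwdDiffCLM_pow_le (by omega) le_rfl u
        · exact normSqL2_fwdDiffCLM_pow_le (by omega) (by omega) _
    _ = 16 ^ n * M * diffEnergy h n u := by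
        rw [diffEnergy, show (16 : ℝ) = 4 * 4 by norm_num, mul_pow]
        ring

lemma abs_integral_diff_mul_le_of_ge (hu : ∀ x, |deriv u x| ≤ M) (h : ℝ) {i j : ℕ}
    (hij : i + j = 2 * n) (hi : n ≤ i) :
    |∫ x, (fwdDiffCLM h ^ (2 * n)) u x * ((fwdDiffCLM h ^ i) u x *
      (fwdDiffCLM h ^ j) (derivCLM ℝ ℝ u) (x + i • h))| ≤ 16 ^ n * M * diffEnergy h n u := by
  have hM : 0 ≤ M := (abs_nonneg _).trans (hu 0)
  have factor (x : ℝ) :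
      |(fwdDiffCLM h ^ i) u x * (fwdDiffCLM h ^ j) (derivCLM ℝ ℝ u) (x + i • h)|
        ≤ 2 ^ j * M * |(fwdDiffCLM h ^ i) u x| := by
    rw [abs_mul, mul_comm, coe_fwdDiffCLM_pow h j]
    exact mul_le_mul_of_nonneg_right (abs_fwdDiff_iter_le hu h j _) (abs_nonneg _)
  refine (abs_integral_mul_le (integrable_sq _) (integrable_sq _) factor (by positivity)).trans ?_
  calc 2 ^ j * M / 2 * (normSqL2 ((fwdDiffCLM h ^ (2 * n)) u) + normSqL2 ((fwdDiffCLM h ^ i) u))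
      ≤ 4 ^ n * M / 2 * (4 ^ n * normSqL2 ((fwdDiffCLM h ^ n) u)
          + 4 ^ n * normSqL2 ((fwdDiffCLM h ^ n) u)) := by
        have := normSqL2_nonneg ((fwdDiffCLM h ^ i) u)
        have := normSqL2_nonneg ((fwdDiffCLM h ^ (2 * n)) u)
        have : (2 : ℝ) ^ j ≤ 4 ^ n :=
          (pow_le_pow_left₀ (by norm_num) (by norm_num) j).trans
            (pow_le_pow_right₀ (by norm_num) (by omega))
        gcongr
        · exact normSqL2_fwdDiffCLM_pow_le (by omega) le_rfl u
        · exact normSqL2_fwdDiffCLM_pow_le hi (by omega) u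
    _ = 16 ^ n * M * normSqL2 ((fwdDiffCLM h ^ n) u) := by
        rw [show (16 : ℝ) = 4 * 4 by norm_num, mul_pow]
        ring
    _ ≤ 16 ^ n * M * diffEnergy h n u := by
        gcongr
        exact normSqL2_fwdDiffCLM_pow_le_diffEnergy h n u

lemma abs_integral_diff_mul_le (hu : ∀ x, |deriv u x| ≤ M) (h : ℝ) {i j : ℕ}
    (hij : i + j = 2 * n) :
    |∫ x, (fwdDiffCLM h ^ (2 * n)) u x * ((fwdDiffCLM h ^ i) u x *
      (fwdDiffCLM h ^ j) (derivCLM ℝ ℝ u) (x + i • h))| ≤ 16 ^ n * M * diffEnergy h n u := by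
  have hM : 0 ≤ M := (abs_nonneg _).trans (hu 0)
  rcases le_or_gt n i with hi | hi
  · exact abs_integral_diff_mul_le_of_ge hu h hij hi
  rcases i with - | i
  · obtain rfl : j = 2 * n := by omega
    simp only [pow_zero, one_apply_eq_self, zero_smul, add_zero]
    rw [← derivCLM_fwdDiffCLM_pow]
    calc _ ≤ M / 2 * normSqL2 ((fwdDiffCLM h ^ (2 * n)) u) := abs_integral_mul_mul_deriv_le hu _
      _ ≤ 4 ^ n * M * (4 ^ n * diffEnergy h n u) := by
          have := normSqL2_nonneg ((fwdDiffCLM h ^ (2 * n)) u)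
          gcongr
          · nlinarith [one_le_pow₀ (M₀ := ℝ) (n := n) (a := 4) (by norm_num)]
          · exact (normSqL2_fwdDiffCLM_pow_le (by omega) le_rfl u).trans
              (by gcongr; exact normSqL2_fwdDiffCLM_pow_le_diffEnergy h n u)
      _ = 16 ^ n * M * diffEnergy h n u := by
          rw [show (16 : ℝ) = 4 * 4 by norm_num, mul_pow]
          ring
  · exact abs_integral_diff_mul_le_of_lt hu h hij hi.le

theorem abs_integral_diff_mul_diff_advection_le (hu : ∀ x, |deriv u x| ≤ M) (h : ℝ) :
    |∫ x, (fwdDiffCLM h ^ (2 * n)) u x * (fwdDiffCLM h ^ (2 * n)) (advection u) x|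
      ≤ 64 ^ n * M * diffEnergy h n u := by
  have leibniz (x : ℝ) : (fwdDiffCLM h ^ (2 * n)) u x * (fwdDiffCLM h ^ (2 * n)) (advection u) x
      = ∑ ij ∈ antidiagonal (2 * n), ((2 * n).choose ij.1 : ℝ) *
        ((fwdDiffCLM h ^ (2 * n)) u x * ((fwdDiffCLM h ^ ij.1) u x *
          (fwdDiffCLM h ^ ij.2) (derivCLM ℝ ℝ u) (x + ij.1 • h))) := by
    rw [coe_fwdDiffCLM_pow h _ (advection u), advection, coe_schwartzMul, fwdDiff_iter_mul_apply,
      Finset.mul_sum]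
    refine Finset.sum_congr rfl fun ij _ => ?_
    rw [coe_fwdDiffCLM_pow h ij.1, coe_fwdDiffCLM_pow h ij.2, nsmul_eq_mul]
    ring
  have integrable_term (ij : ℕ × ℕ) : Integrable (fun x => (fwdDiffCLM h ^ (2 * n)) u x *
      ((fwdDiffCLM h ^ ij.1) u x *
        (fwdDiffCLM h ^ ij.2) (derivCLM ℝ ℝ u) (x + ij.1 • h))) := by
    simpa [coe_schwartzMul] using integrable_mul ((fwdDiffCLM h ^ (2 * n)) u)
      (schwartzMul ((fwdDiffCLM h ^ ij.1) u)
        (compSubConstCLM ℝ (-(ij.1 • h)) ((fwdDiffCLM h ^ ij.2) (derivCLM ℝ ℝ u))))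
  simp only [leibniz]
  rw [integral_finsetSum _ fun ij _ => (integrable_term ij).const_mul _]
  calc _ ≤ ∑ ij ∈ antidiagonal (2 * n),
        ((2 * n).choose ij.1 : ℝ) * (16 ^ n * M * diffEnergy h n u) := by
        refine (Finset.abs_sum_le_sum_abs _ _).trans (Finset.sum_le_sum fun ij hij => ?_)
        rw [integral_const_mul, abs_mul, Nat.abs_cast]
        gcongr
        exact abs_integral_diff_mul_le hu h (mem_antidiagonal.1 hij)
    _ = 64 ^ n * M * diffEnergy h n u := by
        rw [← Finset.sum_mul, Finset.Nat.sum_antidiagonal_eq_sum_range_succ_mk,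
          ← Nat.cast_sum, Nat.sum_range_choose, show (64 : ℝ) = 2 ^ 2 * 16 by norm_num, mul_pow]
        push_cast [pow_mul]
        ring

end DifferenceEnergy

/-- The Fourier transform of a real Schwartz function, as a map between Schwartz spaces. -/
def hat : 𝓢(ℝ, ℝ) →L[ℝ] 𝓢(ℝ, ℂ) :=
  FourierTransform.fourierCLM ℝ 𝓢(ℝ, ℂ) ∘L postcompCLM Complex.ofRealCLM

/-- The cross spectrum `Re (conj û · v̂)`. -/
def crossSpectrum (u v : 𝓢(ℝ, ℝ)) : 𝓢(ℝ, ℝ) := pairing (innerSL ℝ) (hat u) (hat v)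

/-- The Fourier multiplier `|e^{2πiy} - 1|²` of `Δ_h^* Δ_h`, at `y = hξ`. -/
def diffSymbol (y : ℝ) : ℝ := (2 * Real.sin (Real.pi * y)) ^ 2

lemma coe_hat (u : 𝓢(ℝ, ℝ)) : ⇑(hat u) = 𝓕 (cc u) := rfl

lemma crossSpectrum_apply (u v : 𝓢(ℝ, ℝ)) (ξ : ℝ) :
    crossSpectrum u v ξ = inner ℝ (hat u ξ) (hat v ξ) := rfl

lemma crossSpectrum_self (u : 𝓢(ℝ, ℝ)) (ξ : ℝ) : crossSpectrum u u ξ = ‖hat u ξ‖ ^ 2 :=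
  real_inner_self_eq_norm_sq (hat u ξ)

lemma integral_mul_eq_integral_crossSpectrum (u v : 𝓢(ℝ, ℝ)) :
    ∫ x, u x * v x = ∫ ξ, crossSpectrum u v ξ := by
  have parseval := integral_inner_fourier_fourier
    (postcompCLM Complex.ofRealCLM u : 𝓢(ℝ, ℂ)) (postcompCLM Complex.ofRealCLM v)
  have integrable_inner : Integrable (fun ξ => inner ℂ (hat u ξ) (hat v ξ)) :=
    ((hat v).memLp 2).integrable_mul ((hat u).memLp 2).star
  calc ∫ x, u x * v x = (∫ x, inner ℂ (u x : ℂ) (v x : ℂ)).re := by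
        rw [← Complex.ofReal_re (∫ x, u x * v x), ← integral_complex_ofReal]
        simp [mul_comm]
    _ = (∫ ξ, inner ℂ (hat u ξ) (hat v ξ)).re := congrArg Complex.re parseval.symm
    _ = ∫ ξ, crossSpectrum u v ξ := (integral_re integrable_inner).symm

lemma normSqL2_eq_integral_norm_hat_sq (u : 𝓢(ℝ, ℝ)) : normSqL2 u = ∫ ξ, ‖hat u ξ‖ ^ 2 := by
  simpa only [normSqL2, ← pow_two, crossSpectrum_self] using
    integral_mul_eq_integral_crossSpectrum u u

lemma integrable_norm_hat_sq (u : 𝓢(ℝ, ℝ)) : Integrable (fun ξ => ‖hat u ξ‖ ^ 2) :=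
  (crossSpectrum u u).integrable.congr (.of_forall (crossSpectrum_self u))

lemma hat_derivCLM (u : 𝓢(ℝ, ℝ)) (ξ : ℝ) :
    hat (derivCLM ℝ ℝ u) ξ = 2 * Real.pi * Complex.I * ξ * hat u ξ := by
  set v : 𝓢(ℝ, ℂ) := postcompCLM Complex.ofRealCLM u
  have complexify : cc (derivCLM ℝ ℝ u) = deriv v :=
    funext fun x => (u.hasDerivAt x).ofReal_comp.deriv.symm
  rw [coe_hat, complexify, Real.fourier_deriv v.integrable v.differentiable
    (derivCLM ℝ ℂ v).integrable]
  rfl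

lemma norm_hat_derivCLM_sq (u : 𝓢(ℝ, ℝ)) (ξ : ℝ) :
    ‖hat (derivCLM ℝ ℝ u) ξ‖ ^ 2 = (2 * Real.pi * ξ) ^ 2 * ‖hat u ξ‖ ^ 2 := by
  simp [hat_derivCLM, mul_pow]

lemma hat_compSubConstCLM_neg (h : ℝ) (u : 𝓢(ℝ, ℝ)) (ξ : ℝ) :
    hat (compSubConstCLM ℝ (-h) u) ξ
      = Complex.exp (Complex.I * (2 * Real.pi * (h * ξ) : ℝ)) * hat u ξ := by
  have translate : cc (compSubConstCLM ℝ (-h) u) = cc u ∘ fun x => x + h :=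
    funext fun x => by simp [cc]
  rw [coe_hat, translate, coe_hat, mul_comm Complex.I, ← Real.fourierChar_apply,
    Real.fourier_real_eq, Real.fourier_real_eq]
  exact congrFun (Fourier.fourierIntegral_comp_add_right Real.fourierChar volume (cc u) h) ξ

lemma hat_fwdDiffCLM (h : ℝ) (u : 𝓢(ℝ, ℝ)) (ξ : ℝ) :
    hat (fwdDiffCLM h u) ξ
      = (Complex.exp (Complex.I * (2 * Real.pi * (h * ξ) : ℝ)) - 1) * hat u ξ := by
  rw [sub_mul, one_mul, ← hat_compSubConstCLM_neg, fwdDiffCLM, sub_apply, map_sub, sub_apply,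
    ContinuousLinearMap.id_apply]

lemma diffSymbol_nonneg (y : ℝ) : 0 ≤ diffSymbol y := sq_nonneg _

lemma norm_exp_sub_one_sq (y : ℝ) :
    ‖Complex.exp (Complex.I * (2 * Real.pi * y : ℝ)) - 1‖ ^ 2 = diffSymbol y := by
  rw [Complex.norm_exp_I_mul_ofReal_sub_one, Real.norm_eq_abs, sq_abs, diffSymbol]
  ring_nf

lemma inner_mul_mul (a z w : ℂ) : inner ℝ (a * z) (a * w) = ‖a‖ ^ 2 * inner ℝ z w := by
  simp only [Complex.inner, map_mul, ← Complex.normSq_eq_norm_sq, ← Complex.re_ofReal_mul,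
    Complex.normSq_eq_conj_mul_self]
  ring_nf

lemma crossSpectrum_fwdDiffCLM_pow (h : ℝ) (k : ℕ) (u v : 𝓢(ℝ, ℝ)) (ξ : ℝ) :
    crossSpectrum ((fwdDiffCLM h ^ k) u) ((fwdDiffCLM h ^ k) v) ξ
      = diffSymbol (h * ξ) ^ k * crossSpectrum u v ξ := by
  induction k with
  | zero => simp
  | succ k ih =>
    rw [pow_succ', mul_apply_eq_comp, mul_apply_eq_comp, crossSpectrum_apply, hat_fwdDiffCLM,
      hat_fwdDiffCLM, inner_mul_mul, norm_exp_sub_one_sq, ← crossSpectrum_apply, ih, pow_succ',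
      mul_assoc]

lemma norm_hat_fwdDiffCLM_pow_sq (h : ℝ) (k : ℕ) (u : 𝓢(ℝ, ℝ)) (ξ : ℝ) :
    ‖hat ((fwdDiffCLM h ^ k) u) ξ‖ ^ 2 = diffSymbol (h * ξ) ^ k * ‖hat u ξ‖ ^ 2 := by
  simpa only [crossSpectrum_self] using crossSpectrum_fwdDiffCLM_pow h k u u ξ

lemma normSqL2_fwdDiffCLM_pow (h : ℝ) (k : ℕ) (u : 𝓢(ℝ, ℝ)) :
    normSqL2 ((fwdDiffCLM h ^ k) u) = ∫ ξ, diffSymbol (h * ξ) ^ k * ‖hat u ξ‖ ^ 2 := by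
  simp only [normSqL2_eq_integral_norm_hat_sq, norm_hat_fwdDiffCLM_pow_sq]

lemma abs_integral_diffSymbol_mul_crossSpectrum_le {u : 𝓢(ℝ, ℝ)} {M : ℝ}
    (hu : ∀ x, |deriv u x| ≤ M) (n : ℕ) (h : ℝ) :
    |∫ ξ, diffSymbol (h * ξ) ^ (2 * n) * crossSpectrum u (advection u) ξ|
      ≤ 64 ^ n * M * diffEnergy h n u := by
  simpa only [integral_mul_eq_integral_crossSpectrum, crossSpectrum_fwdDiffCLM_pow]
    using abs_integral_diff_mul_diff_advection_le (n := n) hu h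

lemma continuous_diffSymbol : Continuous diffSymbol := by
  unfold diffSymbol
  fun_prop

lemma diffSymbol_pos {y : ℝ} (hy : y ∈ Set.Ioo 0 1) : 0 < diffSymbol y := by
  have : 0 < Real.sin (Real.pi * y) := Real.sin_pos_of_pos_of_lt_pi
    (mul_pos Real.pi_pos hy.1) (mul_lt_of_lt_one_right Real.pi_pos hy.2)
  unfold diffSymbol
  positivity

lemma diffSymbol_le_four (y : ℝ) : diffSymbol y ≤ 4 := by
  rw [diffSymbol, mul_pow]
  linarith [Real.sin_sq_le_one (Real.pi * y)]

lemma diffSymbol_le_sq (y : ℝ) : diffSymbol y ≤ (2 * Real.pi * y) ^ 2 := by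
  rw [diffSymbol, mul_assoc, mul_pow, mul_pow 2]
  exact mul_le_mul_of_nonneg_left (sq_le_sq.2 Real.abs_sin_le_abs) (by norm_num)

lemma diffSymbol_mul_abs (h ξ : ℝ) : diffSymbol (h * |ξ|) = diffSymbol (h * ξ) := by
  rcases abs_choice ξ with e | e <;> simp [e, diffSymbol]

lemma diffSymbol_pow_le (h ξ : ℝ) (p : ℕ) :
    diffSymbol (h * ξ) ^ p ≤ h ^ (2 * p) * (2 * Real.pi * ξ) ^ (2 * p) := by
  rw [pow_mul, pow_mul, ← mul_pow, ← mul_pow]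
  refine pow_le_pow_left₀ (diffSymbol_nonneg _) ((diffSymbol_le_sq _).trans_eq ?_) p
  ring

/-- The moment `∫₀^∞ y^{-2σ-1} |e^{2πiy} - 1|^{2p} dy`: the constant relating the `p`-th
differences, averaged over the step, to the homogeneous Sobolev weight `|ξ|^{2σ}`. -/
def diffMoment (σ : ℝ) (p : ℕ) : ℝ := ∫ y in Set.Ioi 0, y ^ (-2 * σ - 1) * diffSymbol y ^ p

section DiffMoment

variable {σ : ℝ} {p : ℕ}

lemma integrableOn_rpow_mul_diffSymbol_pow (hσ : 0 < σ) (hp : σ < p) (ξ : ℝ) :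
    IntegrableOn (fun h => h ^ (-2 * σ - 1) * diffSymbol (h * ξ) ^ p) (Set.Ioi 0) := by
  have norm_eq (h : ℝ) : ‖diffSymbol (h * ξ) ^ p‖ = diffSymbol (h * ξ) ^ p :=
    Real.norm_of_nonneg (pow_nonneg (diffSymbol_nonneg _) p)
  refine mellin_convergent_of_isBigO_scalar (a := 0) (b := -(2 * p : ℕ))
    (Continuous.continuousOn (by have := continuous_diffSymbol; fun_prop)
      |>.locallyIntegrableOn measurableSet_Ioi) ?_ (by linarith) ?_ (by push_cast; linarith)
  · refine .of_bound (4 ^ p) (.of_forall fun h => ?_)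
    rw [norm_eq, neg_zero, Real.rpow_zero, norm_one, mul_one]
    exact pow_le_pow_left₀ (diffSymbol_nonneg _) (diffSymbol_le_four _) p
  · refine .of_bound ((2 * Real.pi * ξ) ^ (2 * p)) (.of_forall fun h => ?_)
    rw [norm_eq, neg_neg, Real.rpow_natCast, Real.norm_of_nonneg ((even_two_mul p).pow_nonneg h),
      mul_comm (_ ^ _)]
    exact diffSymbol_pow_le h ξ p

lemma integral_rpow_mul_diffSymbol_pow (hσ : 0 < σ) (hp : σ < p) (ξ : ℝ) :
    ∫ h in Set.Ioi 0, h ^ (-2 * σ - 1) * diffSymbol (h * ξ) ^ p = diffMoment σ p * (ξ ^ 2) ^ σ := by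
  rcases eq_or_ne ξ 0 with rfl | hξ
  · have : p ≠ 0 := Nat.cast_ne_zero.1 (hσ.trans hp).ne'
    simp [diffSymbol, this, Real.zero_rpow hσ.ne']
  have hb : 0 < |ξ| := abs_pos.2 hξ
  have weight : (ξ ^ 2) ^ σ * |ξ| ^ (-2 * σ - 1) = |ξ|⁻¹ := by
    rw [← sq_abs, ← Real.rpow_natCast, ← Real.rpow_mul hb.le, ← Real.rpow_add hb,
      ← Real.rpow_neg_one]
    congr 1
    push_cast
    ring
  have scaling := integral_comp_mul_right_Ioi'
    (fun y => y ^ (-2 * σ - 1) * diffSymbol y ^ p) 0 hb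
  rw [zero_mul] at scaling
  rw [diffMoment, ← scaling, smul_eq_mul, mul_comm |ξ|, mul_assoc, ← integral_mul_const]
  refine setIntegral_congr_fun measurableSet_Ioi fun h hh => ?_
  simp only [diffSymbol_mul_abs, Real.mul_rpow (le_of_lt hh) hb.le]
  calc _ = |ξ| * |ξ|⁻¹ * (h ^ (-2 * σ - 1) * diffSymbol (h * ξ) ^ p) := by
        rw [mul_inv_cancel₀ hb.ne', one_mul]
    _ = _ := by rw [← weight]; ring

lemma diffMoment_pos (hσ : 0 < σ) (hp : σ < p) : 0 < diffMoment σ p := by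
  have integrable_kernel := integrableOn_rpow_mul_diffSymbol_pow hσ hp 1
  simp only [mul_one] at integrable_kernel
  rw [diffMoment, setIntegral_pos_iff_support_of_nonneg_ae _ integrable_kernel]
  · refine lt_of_lt_of_le (by simp) (measure_mono (μ := volume) (s := Set.Ioo (0 : ℝ) 1) ?_)
    exact fun y hy => ⟨(mul_pos (Real.rpow_pos_of_pos hy.1 _) (pow_pos (diffSymbol_pos hy) p)).ne',
      hy.1⟩
  · exact (ae_restrict_mem measurableSet_Ioi).mono fun y hy =>
      mul_nonneg (Real.rpow_nonneg (le_of_lt hy) _) (pow_nonneg (diffSymbol_nonneg y) p)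

/-- The weight `∫₀¹ h^{-2σ-1} |e^{2πihξ} - 1|^{2p} dh`, a substitute for `|ξ|^{2σ}` which only
involves differences with step at most one. -/
def stepWeight (σ : ℝ) (p : ℕ) (ξ : ℝ) : ℝ :=
  ∫ h in Set.Ioc 0 1, h ^ (-2 * σ - 1) * diffSymbol (h * ξ) ^ p

lemma measurable_stepWeight (σ : ℝ) (p : ℕ) : Measurable (stepWeight σ p) := by
  have := continuous_diffSymbol.measurable
  refine (StronglyMeasurable.integral_prod_right' (ν := volume.restrict (Set.Ioc (0 : ℝ) 1))
    (f := fun z : ℝ × ℝ => z.2 ^ (-2 * σ - 1) * diffSymbol (z.2 * z.1) ^ p) ?_).measurable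
  exact Measurable.stronglyMeasurable (by fun_prop)

lemma stepWeight_le (hσ : 0 < σ) (hp : σ < p) (ξ : ℝ) :
    stepWeight σ p ξ ≤ diffMoment σ p * (ξ ^ 2) ^ σ := by
  rw [← integral_rpow_mul_diffSymbol_pow hσ hp]
  refine setIntegral_mono_set (integrableOn_rpow_mul_diffSymbol_pow hσ hp ξ) ?_
    Set.Ioc_subset_Ioi_self.eventuallyLE
  exact (ae_restrict_mem measurableSet_Ioi).mono fun y hy =>
    mul_nonneg (Real.rpow_nonneg (le_of_lt hy) _) (pow_nonneg (diffSymbol_nonneg _) p)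

lemma exists_abs_diffMoment_mul_rpow_sub_stepWeight_le (hσ : 0 < σ) (hp : σ < p) :
    ∃ C, ∀ ξ, |diffMoment σ p * (ξ ^ 2) ^ σ - stepWeight σ p ξ| ≤ C := by
  refine ⟨∫ h in Set.Ioi 1, h ^ (-2 * σ - 1) * 4 ^ p, fun ξ => ?_⟩
  have integrable_kernel := integrableOn_rpow_mul_diffSymbol_pow hσ hp ξ
  rw [← integral_rpow_mul_diffSymbol_pow hσ hp, ← Set.Ioc_union_Ioi_eq_Ioi zero_le_one,
    setIntegral_union (Set.Ioc_disjoint_Ioi le_rfl) measurableSet_Ioi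
      (integrable_kernel.mono_set Set.Ioc_subset_Ioi_self)
      (integrable_kernel.mono_set (Set.Ioi_subset_Ioi zero_le_one)),
    stepWeight, add_sub_cancel_left, ← Real.norm_eq_abs]
  refine norm_integral_le_of_norm_le
    ((integrableOn_Ioi_rpow_of_lt (by linarith) one_pos).mul_const _) ?_
  refine (ae_restrict_mem measurableSet_Ioi).mono fun h hh => ?_
  have hh : (0 : ℝ) < h := one_pos.trans hh
  have := pow_nonneg (diffSymbol_nonneg (h * ξ)) p
  rw [Real.norm_of_nonneg (by positivity)]
  gcongr
  · exact diffSymbol_nonneg _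
  · exact diffSymbol_le_four _

lemma integrable_prod_rpow_mul_diffSymbol_pow (hp : σ < p) (g : 𝓢(ℝ, ℝ)) :
    Integrable (fun z : ℝ × ℝ => z.1 ^ (-2 * σ - 1) * diffSymbol (z.1 * z.2) ^ p * g z.2)
      ((volume.restrict (Set.Ioc 0 1)).prod volume) := by
  have integrable_rpow :
      IntegrableOn (fun h : ℝ => h ^ ((2 * p : ℕ) + (-2 * σ - 1))) (Set.Ioc 0 1) :=
    (intervalIntegrable_iff_integrableOn_Ioc_of_le zero_le_one).1
      (intervalIntegral.intervalIntegrable_rpow' (by push_cast; linarith))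
  have measurable_diffSymbol := continuous_diffSymbol.measurable
  have measurable_g := g.continuous.measurable
  refine (integrable_rpow.mul_prod ((g.integrable_pow_mul volume (2 * p)).const_mul
    ((2 * Real.pi) ^ (2 * p)))).mono' (Measurable.aestronglyMeasurable (by fun_prop)) ?_
  have : ∀ᵐ z : ℝ × ℝ ∂(volume.restrict (Set.Ioc 0 1)).prod volume, z.1 ∈ Set.Ioc 0 1 :=
    Measure.quasiMeasurePreserving_fst.ae (ae_restrict_mem measurableSet_Ioc)
  refine this.mono fun z hz => ?_
  have rpow_pos := Real.rpow_pos_of_pos hz.1 (-2 * σ - 1)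
  rw [Real.rpow_add hz.1, Real.rpow_natCast, norm_mul, Real.norm_of_nonneg
    (mul_nonneg rpow_pos.le (pow_nonneg (diffSymbol_nonneg _) p)), Real.norm_eq_abs z.2,
    (even_two_mul p).pow_abs]
  calc _ ≤ z.1 ^ (-2 * σ - 1) * (z.1 ^ (2 * p) * (2 * Real.pi * z.2) ^ (2 * p)) * ‖g z.2‖ := by
        gcongr
        exact diffSymbol_pow_le _ _ _
    _ = _ := by ring

lemma integrableOn_rpow_mul_integral (hp : σ < p) (g : 𝓢(ℝ, ℝ)) :
    IntegrableOn (fun h => h ^ (-2 * σ - 1) * ∫ ξ, diffSymbol (h * ξ) ^ p * g ξ)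
      (Set.Ioc 0 1) := by
  simpa only [IntegrableOn, mul_assoc, integral_const_mul] using
    (integrable_prod_rpow_mul_diffSymbol_pow hp g).integral_prod_left

lemma integrable_stepWeight_mul (hp : σ < p) (g : 𝓢(ℝ, ℝ)) :
    Integrable (fun ξ => stepWeight σ p ξ * g ξ) := by
  simpa only [stepWeight, integral_mul_const] using
    (integrable_prod_rpow_mul_diffSymbol_pow hp g).integral_prod_right

lemma integral_stepWeight_mul (hp : σ < p) (g : 𝓢(ℝ, ℝ)) :
    ∫ ξ, stepWeight σ p ξ * g ξ
      = ∫ h in Set.Ioc 0 1, h ^ (-2 * σ - 1) * ∫ ξ, diffSymbol (h * ξ) ^ p * g ξ := by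
  simpa only [stepWeight, mul_assoc, integral_const_mul, ← integral_mul_const] using
    (integral_integral_swap (f := fun h ξ => h ^ (-2 * σ - 1) * diffSymbol (h * ξ) ^ p * g ξ)
      (integrable_prod_rpow_mul_diffSymbol_pow hp g)).symm

end DiffMoment

/-- The squared `H^s` norm of a real Schwartz function, up to the equality of
`sobolevEnergy` and `HsNorm` proved in `HsNorm_cc_sq`. -/
def sobolevEnergy (s : ℝ) (u : 𝓢(ℝ, ℝ)) : ℝ := ∫ ξ, (1 + ξ ^ 2) ^ s * ‖hat u ξ‖ ^ 2

/-- Multiplication of Schwartz functions by `⟨ξ⟩^{2s} = (1 + ξ²)^s`. -/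
def bracketCLM (F : Type*) [NormedAddCommGroup F] [NormedSpace ℝ F] (s : ℝ) :
    𝓢(ℝ, F) →L[ℝ] 𝓢(ℝ, F) :=
  smulLeftCLM F fun ξ : ℝ => (1 + ‖ξ‖ ^ 2) ^ s

lemma bracketCLM_apply {F : Type*} [NormedAddCommGroup F] [NormedSpace ℝ F] (s : ℝ)
    (g : 𝓢(ℝ, F)) (ξ : ℝ) : bracketCLM F s g ξ = (1 + ξ ^ 2) ^ s • g ξ := by
  rw [bracketCLM, smulLeftCLM_apply_apply (Function.hasTemperateGrowth_one_add_norm_sq_rpow ℝ s),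
    Real.norm_eq_abs, sq_abs]

lemma integrable_one_add_sq_rpow_mul (s : ℝ) (g : 𝓢(ℝ, ℝ)) :
    Integrable (fun ξ => (1 + ξ ^ 2) ^ s * g ξ) :=
  (bracketCLM ℝ s g).integrable.congr (.of_forall (bracketCLM_apply s g))

lemma integrable_sq_rpow_mul {σ : ℝ} (hσ : 0 ≤ σ) (g : 𝓢(ℝ, ℝ)) :
    Integrable (fun ξ => (ξ ^ 2) ^ σ * g ξ) := by
  have measurable_g := g.continuous.measurable
  refine (integrable_one_add_sq_rpow_mul σ g).mono
    (Measurable.aestronglyMeasurable (by fun_prop)) (.of_forall fun ξ => ?_)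
  have le_rpow : (ξ ^ 2) ^ σ ≤ (1 + ξ ^ 2) ^ σ := by gcongr; simp
  rw [norm_mul, norm_mul, Real.norm_of_nonneg (by positivity),
    Real.norm_of_nonneg (by positivity : 0 ≤ (1 + ξ ^ 2) ^ σ)]
  gcongr

lemma sobolevEnergy_nonneg (s : ℝ) (u : 𝓢(ℝ, ℝ)) : 0 ≤ sobolevEnergy s u :=
  integral_nonneg fun ξ => by positivity

lemma integrable_one_add_sq_rpow_mul_norm_hat_sq (s : ℝ) (u : 𝓢(ℝ, ℝ)) :
    Integrable (fun ξ => (1 + ξ ^ 2) ^ s * ‖hat u ξ‖ ^ 2) := by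
  simpa only [crossSpectrum_self] using integrable_one_add_sq_rpow_mul s (crossSpectrum u u)

lemma integrable_sq_rpow_mul_norm_hat_sq {σ : ℝ} (hσ : 0 ≤ σ) (u : 𝓢(ℝ, ℝ)) :
    Integrable (fun ξ => (ξ ^ 2) ^ σ * ‖hat u ξ‖ ^ 2) := by
  simpa only [crossSpectrum_self] using integrable_sq_rpow_mul hσ (crossSpectrum u u)

lemma integral_sq_rpow_mul_norm_hat_sq_le {s : ℝ} (hs : 0 ≤ s) (u : 𝓢(ℝ, ℝ)) :
    ∫ ξ, (ξ ^ 2) ^ s * ‖hat u ξ‖ ^ 2 ≤ sobolevEnergy s u := by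
  refine integral_mono (integrable_sq_rpow_mul_norm_hat_sq hs u)
    (integrable_one_add_sq_rpow_mul_norm_hat_sq s u) fun ξ => ?_
  dsimp only
  gcongr
  simp

lemma integral_sq_rpow_mul_norm_hat_derivCLM_sq_le {s : ℝ} (hs : 0 < s) (u : 𝓢(ℝ, ℝ)) :
    ∫ ξ, (ξ ^ 2) ^ (s - 1) * ‖hat (derivCLM ℝ ℝ u) ξ‖ ^ 2
      ≤ (2 * Real.pi) ^ 2 * sobolevEnergy s u := by
  have absorb (ξ : ℝ) : (ξ ^ 2) ^ (s - 1) * ‖hat (derivCLM ℝ ℝ u) ξ‖ ^ 2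
      = (2 * Real.pi) ^ 2 * ((ξ ^ 2) ^ s * ‖hat u ξ‖ ^ 2) := by
    have : (ξ ^ 2) ^ s = (ξ ^ 2) ^ (s - 1) * ξ ^ 2 := by
      rw [← Real.rpow_add_one' (sq_nonneg ξ) (by simpa using hs.ne'), sub_add_cancel]
    rw [norm_hat_derivCLM_sq, this]
    ring
  simp only [absorb, integral_const_mul]
  exact mul_le_mul_of_nonneg_left (integral_sq_rpow_mul_norm_hat_sq_le hs.le u) (by positivity)

lemma normSqL2_le_sobolevEnergy {s : ℝ} (hs : 0 ≤ s) (u : 𝓢(ℝ, ℝ)) :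
    normSqL2 u ≤ sobolevEnergy s u := by
  rw [normSqL2_eq_integral_norm_hat_sq]
  refine integral_mono (integrable_norm_hat_sq u)
    (integrable_one_add_sq_rpow_mul_norm_hat_sq s u) fun ξ => ?_
  exact le_mul_of_one_le_left (sq_nonneg _) (Real.one_le_rpow (by simp [sq_nonneg]) hs)

lemma integrableOn_rpow_mul_normSqL2_fwdDiffCLM_pow {σ : ℝ} {p : ℕ} (hp : σ < p) (u : 𝓢(ℝ, ℝ)) :
    IntegrableOn (fun h => h ^ (-2 * σ - 1) * normSqL2 ((fwdDiffCLM h ^ p) u)) (Set.Ioc 0 1) := by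
  simpa only [normSqL2_fwdDiffCLM_pow, crossSpectrum_self] using
    integrableOn_rpow_mul_integral hp (crossSpectrum u u)

lemma integral_rpow_mul_normSqL2_fwdDiffCLM_pow_le {σ : ℝ} {p : ℕ} (hσ : 0 < σ) (hp : σ < p)
    (u : 𝓢(ℝ, ℝ)) :
    ∫ h in Set.Ioc 0 1, h ^ (-2 * σ - 1) * normSqL2 ((fwdDiffCLM h ^ p) u)
      ≤ diffMoment σ p * ∫ ξ, (ξ ^ 2) ^ σ * ‖hat u ξ‖ ^ 2 := by
  have swap := integral_stepWeight_mul hp (crossSpectrum u u)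
  have integrable_weight := integrable_stepWeight_mul hp (crossSpectrum u u)
  simp only [crossSpectrum_self, ← normSqL2_fwdDiffCLM_pow] at swap integrable_weight
  rw [← swap, ← integral_const_mul]
  refine integral_mono integrable_weight
    ((integrable_sq_rpow_mul_norm_hat_sq hσ.le u).const_mul _) fun ξ => ?_
  rw [← mul_assoc]
  exact mul_le_mul_of_nonneg_right (stepWeight_le hσ hp ξ) (sq_nonneg _)

section DiffEnergy

variable {s : ℝ} {n : ℕ}

lemma rpow_mul_diffEnergy {h : ℝ} (hh : h ∈ Set.Ioc 0 1) (u : 𝓢(ℝ, ℝ)) :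
    h ^ (-2 * s - 1) * diffEnergy h n u
      = h ^ (-2 * s - 1) * normSqL2 ((fwdDiffCLM h ^ n) u)
        + h ^ (-2 * (s - 1) - 1) * normSqL2 ((fwdDiffCLM h ^ n) (derivCLM ℝ ℝ u)) := by
  have : -2 * (s - 1) - 1 = -2 * s - 1 + (2 : ℕ) := by push_cast; ring
  rw [this, Real.rpow_add_natCast hh.1.ne', diffEnergy]
  ring

lemma integrableOn_rpow_mul_diffEnergy (hn : s < n) (u : 𝓢(ℝ, ℝ)) :
    IntegrableOn (fun h => h ^ (-2 * s - 1) * diffEnergy h n u) (Set.Ioc 0 1) :=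
  ((integrableOn_rpow_mul_normSqL2_fwdDiffCLM_pow hn u).add
    (integrableOn_rpow_mul_normSqL2_fwdDiffCLM_pow (σ := s - 1) (by linarith)
      (derivCLM ℝ ℝ u))).congr_fun (fun _ hh => (rpow_mul_diffEnergy hh u).symm) measurableSet_Ioc

lemma integral_rpow_mul_diffEnergy_le (hs : 1 < s) (hn : s < n) (u : 𝓢(ℝ, ℝ)) :
    ∫ h in Set.Ioc 0 1, h ^ (-2 * s - 1) * diffEnergy h n u
      ≤ (diffMoment s n + diffMoment (s - 1) n * (2 * Real.pi) ^ 2) * sobolevEnergy s u := by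
  have hs₀ : 0 < s := one_pos.trans hs
  have hs₁ : 0 < s - 1 := sub_pos.2 hs
  have hn₁ : s - 1 < n := by linarith
  rw [setIntegral_congr_fun measurableSet_Ioc fun h hh => rpow_mul_diffEnergy hh u,
    integral_add (integrableOn_rpow_mul_normSqL2_fwdDiffCLM_pow hn u)
      (integrableOn_rpow_mul_normSqL2_fwdDiffCLM_pow hn₁ _), add_mul, mul_assoc]
  refine add_le_add ((integral_rpow_mul_normSqL2_fwdDiffCLM_pow_le hs₀ hn u).trans ?_)
    ((integral_rpow_mul_normSqL2_fwdDiffCLM_pow_le hs₁ hn₁ _).trans ?_)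
  · exact mul_le_mul_of_nonneg_left (integral_sq_rpow_mul_norm_hat_sq_le hs₀.le u)
      (diffMoment_pos hs₀ hn).le
  · exact mul_le_mul_of_nonneg_left (integral_sq_rpow_mul_norm_hat_derivCLM_sq_le hs₀ u)
      (diffMoment_pos hs₁ hn₁).le

end DiffEnergy

/-- A Fourier weight `w` whose quadratic form `∫ w |û|²` changes under the transport equation
`∂ₜu + u ∂ₓu = 0` at a rate at most `C ‖∂ₓu‖_∞ ‖u‖²_{H^s}`. -/
structure IsTransportWeight (s : ℝ) (w : ℝ → ℝ) : Prop where
  integrable_mul (g : 𝓢(ℝ, ℝ)) : Integrable (fun ξ => w ξ * g ξ)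
  exists_bound : ∃ C, ∀ (u : 𝓢(ℝ, ℝ)) (M : ℝ), (∀ x, |deriv u x| ≤ M) →
    |∫ ξ, w ξ * crossSpectrum u (advection u) ξ| ≤ C * M * sobolevEnergy s u

namespace IsTransportWeight

variable {s : ℝ} {w w₁ w₂ : ℝ → ℝ}

lemma add (hw₁ : IsTransportWeight s w₁) (hw₂ : IsTransportWeight s w₂) :
    IsTransportWeight s (w₁ + w₂) where
  integrable_mul g := by
    simp only [Pi.add_apply, add_mul]
    exact (hw₁.integrable_mul g).add (hw₂.integrable_mul g)
  exists_bound := by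
    obtain ⟨C₁, bound₁⟩ := hw₁.exists_bound
    obtain ⟨C₂, bound₂⟩ := hw₂.exists_bound
    refine ⟨C₁ + C₂, fun u M hu => ?_⟩
    simp only [Pi.add_apply, add_mul]
    rw [integral_add (hw₁.integrable_mul _) (hw₂.integrable_mul _)]
    exact (abs_add_le _ _).trans (add_le_add (bound₁ u M hu) (bound₂ u M hu))

lemma const_mul (hw : IsTransportWeight s w) (a : ℝ) :
    IsTransportWeight s (fun ξ => a * w ξ) where
  integrable_mul g := by simpa only [mul_assoc] using (hw.integrable_mul g).const_mul a
  exists_bound := by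
    obtain ⟨C, bound⟩ := hw.exists_bound
    refine ⟨|a| * C, fun u M hu => ?_⟩
    simp only [mul_assoc]
    rw [integral_const_mul, abs_mul, ← mul_assoc C]
    exact mul_le_mul_of_nonneg_left (bound u M hu) (abs_nonneg a)

lemma finsetSum {ι : Type*} {t : Finset ι} {w : ι → ℝ → ℝ}
    (hw : ∀ i ∈ t, IsTransportWeight s (w i)) : IsTransportWeight s (∑ i ∈ t, w i) :=
  Finset.sum_induction w (IsTransportWeight s) (fun _ _ => add)
    ⟨fun _ => by simp, 0, fun _ _ _ => by simp⟩ hw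

lemma exists_pos_bound (hw : IsTransportWeight s w) :
    ∃ C > 0, ∀ (u : 𝓢(ℝ, ℝ)) (M : ℝ), (∀ x, |deriv u x| ≤ M) →
      |∫ ξ, w ξ * crossSpectrum u (advection u) ξ| ≤ C * M * sobolevEnergy s u := by
  obtain ⟨C, bound⟩ := hw.exists_bound
  refine ⟨|C| + 1, by positivity, fun u M hu => (bound u M hu).trans ?_⟩
  have M_nonneg : 0 ≤ M := (abs_nonneg _).trans (hu 0)
  have energy_nonneg := sobolevEnergy_nonneg s u
  gcongr
  linarith [le_abs_self C]

end IsTransportWeight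

lemma normSqL2_advection_le {u : 𝓢(ℝ, ℝ)} {M : ℝ} (hu : ∀ x, |deriv u x| ≤ M) :
    normSqL2 (advection u) ≤ M ^ 2 * normSqL2 u := by
  rw [normSqL2, normSqL2, ← integral_const_mul]
  refine integral_mono (integrable_sq _) ((integrable_sq u).const_mul _) fun x => ?_
  calc (u x * deriv u x) ^ 2 = |deriv u x| ^ 2 * u x ^ 2 := by rw [sq_abs]; ring
    _ ≤ M ^ 2 * u x ^ 2 := by gcongr; exact hu x

lemma integral_abs_crossSpectrum_le (u v : 𝓢(ℝ, ℝ)) :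
    ∫ ξ, |crossSpectrum u v ξ| ≤ √(normSqL2 u) * √(normSqL2 v) := by
  have holder := integral_mul_norm_le_Lp_mul_Lq (μ := volume) Real.HolderConjugate.two_two
    (f := hat u) (g := hat v) (by simpa using (hat u).memLp 2) (by simpa using (hat v).memLp 2)
  simp only [Real.rpow_two, ← normSqL2_eq_integral_norm_hat_sq, ← Real.sqrt_eq_rpow] at holder
  refine (integral_mono (crossSpectrum u v).integrable.abs
    (((hat u).memLp 2).norm.integrable_mul ((hat v).memLp 2).norm) fun ξ => ?_).trans holder
  exact abs_real_inner_le_norm (hat u ξ) (hat v ξ)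

lemma isTransportWeight_of_abs_le {s : ℝ} (hs : 0 ≤ s) {w : ℝ → ℝ} {K : ℝ} (hw : Measurable w)
    (hK : ∀ ξ, |w ξ| ≤ K) : IsTransportWeight s w where
  integrable_mul g := g.integrable.bdd_mul hw.aestronglyMeasurable (.of_forall hK)
  exists_bound := by
    have K_nonneg : 0 ≤ K := (abs_nonneg _).trans (hK 0)
    refine ⟨K, fun u M hu => ?_⟩
    have M_nonneg : 0 ≤ M := (abs_nonneg _).trans (hu 0)
    set g := crossSpectrum u (advection u)
    calc |∫ ξ, w ξ * g ξ| ≤ ∫ ξ, K * |g ξ| := by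
          rw [← Real.norm_eq_abs]
          refine norm_integral_le_of_norm_le (g.integrable.abs.const_mul K) (.of_forall fun ξ => ?_)
          rw [norm_mul]
          exact mul_le_mul_of_nonneg_right (hK ξ) (norm_nonneg _)
      _ ≤ K * (√(normSqL2 u) * √(M ^ 2 * normSqL2 u)) := by
        rw [integral_const_mul]
        gcongr
        exact (integral_abs_crossSpectrum_le u _).trans (by gcongr; exact normSqL2_advection_le hu)
      _ = K * M * normSqL2 u := by
        rw [Real.sqrt_mul (sq_nonneg M), Real.sqrt_sq M_nonneg, mul_left_comm (√_),
          Real.mul_self_sqrt (normSqL2_nonneg u), mul_assoc]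
      _ ≤ K * M * sobolevEnergy s u := by
        gcongr
        exact normSqL2_le_sobolevEnergy hs u

lemma isBigO_one_add_rpow_sub_sum_choose_mul_rpow (s : ℝ) :
    (fun y => (1 + y) ^ s - ∑ j ∈ Finset.range ⌈s⌉₊, Ring.choose s j * y ^ (s - j))
      =O[Filter.atTop] fun _ => (1 : ℝ) := by
  have taylor := (Real.one_add_rpow_hasFPowerSeriesAt_zero (a := s)).isBigO_sub_partialSum_pow ⌈s⌉₊
  simp only [zero_add, FormalMultilinearSeries.partialSum, binomialSeries_apply,
    List.ofFn_const, List.prod_replicate, smul_eq_mul] at taylor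
  refine ((Asymptotics.isBigO_refl (fun y : ℝ => y ^ s) _).mul
    (taylor.comp_tendsto tendsto_inv_atTop_zero)).congr' ?_ (.refl _ _) |>.trans ?_
  · filter_upwards [Filter.eventually_gt_atTop 0] with y pos
    rw [Function.comp_apply, mul_sub, ← Real.mul_rpow pos.le (by positivity), mul_add,
      mul_inv_cancel₀ pos.ne', mul_one, add_comm y, Finset.mul_sum]
    simp only [Real.rpow_sub_natCast pos.ne', inv_pow, div_eq_mul_inv, mul_left_comm]
  · refine .of_bound 1 ?_
    filter_upwards [Filter.eventually_ge_atTop 1] with y one_le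
    have pos : 0 < y := one_pos.trans_le one_le
    rw [Function.comp_apply, norm_inv, Real.norm_of_nonneg pos.le, inv_pow, ← div_eq_mul_inv,
      ← Real.rpow_sub_natCast pos.ne', Real.norm_of_nonneg (by positivity), norm_one, one_mul]
    exact Real.rpow_le_one_of_one_le_of_nonpos one_le (sub_nonpos.2 (Nat.le_ceil s))

lemma exists_abs_one_add_rpow_sub_sum_choose_mul_rpow_le (s : ℝ) :
    ∃ C, ∀ y, 0 ≤ y →
      |(1 + y) ^ s - ∑ j ∈ Finset.range ⌈s⌉₊, Ring.choose s j * y ^ (s - j)| ≤ C := by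
  obtain ⟨C₁, bound_atTop⟩ := (isBigO_one_add_rpow_sub_sum_choose_mul_rpow s).bound
  obtain ⟨R, bound_of_ge⟩ := Filter.eventually_atTop.1 bound_atTop
  have continuousOn : ContinuousOn (fun y => (1 + y) ^ s -
      ∑ j ∈ Finset.range ⌈s⌉₊, Ring.choose s j * y ^ (s - j)) (Set.Icc 0 R) := by
    refine .sub (.rpow_const (by fun_prop) fun y hy => .inl (by linarith [hy.1])) ?_
    refine continuousOn_finsetSum _ fun j hj => ?_
    have : (j : ℝ) < s := Nat.lt_ceil.1 (Finset.mem_range.1 hj)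
    exact .mul continuousOn_const (.rpow_const continuousOn_id fun _ _ => .inr (by linarith))
  obtain ⟨C₂, bound_Icc⟩ := isCompact_Icc.exists_bound_of_continuousOn continuousOn
  refine ⟨max C₁ C₂, fun y hy => ?_⟩
  rcases le_total R y with far | near
  · simpa using (bound_of_ge y far).trans (mul_le_mul_of_nonneg_right (le_max_left C₁ C₂)
      (norm_nonneg _))
  · exact (bound_Icc y ⟨hy, near⟩).trans (le_max_right _ _)

lemma isTransportWeight_stepWeight {s σ : ℝ} {n : ℕ} (hs : 1 < s) (hσ : σ ≤ s)
    (hn : s < n) : IsTransportWeight s (stepWeight σ (2 * n)) where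
  integrable_mul := integrable_stepWeight_mul (by push_cast; linarith)
  exists_bound := by
    refine ⟨64 ^ n * (diffMoment s n + diffMoment (s - 1) n * (2 * Real.pi) ^ 2),
      fun u M hu => ?_⟩
    have M_nonneg : 0 ≤ M := (abs_nonneg _).trans (hu 0)
    rw [integral_stepWeight_mul (by push_cast; linarith), ← Real.norm_eq_abs]
    calc _ ≤ ∫ h in Set.Ioc 0 1, 64 ^ n * M * (h ^ (-2 * s - 1) * diffEnergy h n u) := by
          refine norm_integral_le_of_norm_le ((integrableOn_rpow_mul_diffEnergy hn u).const_mul _)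
            ((ae_restrict_mem measurableSet_Ioc).mono fun h hh => ?_)
          have rpow_le : h ^ (-2 * σ - 1) ≤ h ^ (-2 * s - 1) :=
            Real.rpow_le_rpow_of_exponent_ge hh.1 hh.2 (by linarith)
          have rpow_nonneg : 0 ≤ h ^ (-2 * σ - 1) := Real.rpow_nonneg hh.1.le _
          rw [norm_mul, Real.norm_of_nonneg rpow_nonneg, mul_left_comm]
          exact mul_le_mul rpow_le (abs_integral_diffSymbol_mul_crossSpectrum_le hu n h)
            (norm_nonneg _) (rpow_nonneg.trans rpow_le)
      _ ≤ 64 ^ n * M * ((diffMoment s n + diffMoment (s - 1) n * (2 * Real.pi) ^ 2)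
            * sobolevEnergy s u) := by
          rw [integral_const_mul]
          exact mul_le_mul_of_nonneg_left (integral_rpow_mul_diffEnergy_le hs hn u) (by positivity)
      _ = _ := by ring

lemma isTransportWeight_sq_rpow {s σ : ℝ} (hs : 1 < s) (hσ₀ : 0 < σ) (hσ : σ ≤ s) :
    IsTransportWeight s (fun ξ => (ξ ^ 2) ^ σ) := by
  obtain ⟨n, hn⟩ := exists_nat_gt s
  have hσn : σ < (2 * n : ℕ) := by push_cast; linarith
  obtain ⟨C, remainder_le⟩ := exists_abs_diffMoment_mul_rpow_sub_stepWeight_le hσ₀ hσn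
  have remainder : IsTransportWeight s
      (fun ξ => diffMoment σ (2 * n) * (ξ ^ 2) ^ σ - stepWeight σ (2 * n) ξ) :=
    isTransportWeight_of_abs_le (by linarith)
      (.sub (by fun_prop) (measurable_stepWeight σ (2 * n))) remainder_le
  convert ((isTransportWeight_stepWeight hs hσ hn).add remainder).const_mul
    (diffMoment σ (2 * n))⁻¹ using 2 with ξ
  rw [Pi.add_apply, add_sub_cancel, inv_mul_cancel_left₀ (diffMoment_pos hσ₀ hσn).ne']

theorem isTransportWeight_one_add_sq_rpow {s : ℝ} (hs : 1 < s) :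
    IsTransportWeight s (fun ξ => (1 + ξ ^ 2) ^ s) := by
  obtain ⟨C, remainder_le⟩ := exists_abs_one_add_rpow_sub_sum_choose_mul_rpow_le s
  have remainder : IsTransportWeight s (fun ξ => (1 + ξ ^ 2) ^ s -
      ∑ j ∈ Finset.range ⌈s⌉₊, Ring.choose s j * (ξ ^ 2) ^ (s - j)) :=
    isTransportWeight_of_abs_le (by linarith) (by fun_prop)
      fun ξ => remainder_le (ξ ^ 2) (sq_nonneg ξ)
  have powers : IsTransportWeight s
      (∑ j ∈ Finset.range ⌈s⌉₊, fun ξ => Ring.choose s j * (ξ ^ 2) ^ (s - j)) :=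
    .finsetSum fun j hj => .const_mul (isTransportWeight_sq_rpow hs
      (sub_pos.2 (Nat.lt_ceil.1 (Finset.mem_range.1 hj))) (by simp)) _
  convert powers.add remainder using 2 with ξ
  simp

/-- Admissible dispersion symbols: continuous functions of at most polynomial growth. -/
structure IsTemperedSymbol (m : ℝ → ℝ) : Prop where
  continuous : Continuous m
  exists_bound : ∃ B r : ℝ, ∀ ξ, |m ξ| ≤ B * (1 + ξ ^ 2) ^ r

section Curves

variable {D E F G : Type*} [NormedAddCommGroup D] [NormedSpace ℝ D] [NormedAddCommGroup E]
  [NormedSpace ℝ E] [NormedAddCommGroup F] [NormedSpace ℝ F] [NormedAddCommGroup G]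
  [NormedSpace ℝ G]

lemma seminorm_pairing_le (B : E →L[ℝ] F →L[ℝ] G) (f : 𝓢(D, E)) (g : 𝓢(D, F)) (k n : ℕ) :
    SchwartzMap.seminorm ℝ k n (pairing B f g) ≤ ‖B‖ * ∑ i ∈ Finset.range (n + 1),
      n.choose i * SchwartzMap.seminorm ℝ k i f * SchwartzMap.seminorm ℝ 0 (n - i) g := by
  refine seminorm_le_bound ℝ k n _ (by positivity) fun x => ?_
  calc ‖x‖ ^ k * ‖iteratedFDeriv ℝ n (pairing B f g) x‖
      ≤ ‖x‖ ^ k * (‖B‖ * ∑ i ∈ Finset.range (n + 1),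
          n.choose i * ‖iteratedFDeriv ℝ i f x‖ * ‖iteratedFDeriv ℝ (n - i) g x‖) := by
        gcongr
        exact B.norm_iteratedFDeriv_le_of_bilinear (f.smooth n) (g.smooth n) x le_rfl
    _ = ‖B‖ * ∑ i ∈ Finset.range (n + 1),
          n.choose i * (‖x‖ ^ k * ‖iteratedFDeriv ℝ i f x‖) * ‖iteratedFDeriv ℝ (n - i) g x‖ := by
        rw [mul_left_comm, Finset.mul_sum]
        simp only [mul_assoc, mul_left_comm (‖x‖ ^ k)]
    _ ≤ _ := by
        gcongr
        · exact le_seminorm ℝ k _ f x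
        · exact norm_iteratedFDeriv_le_seminorm ℝ g _ x

lemma continuous_pairing (B : E →L[ℝ] F →L[ℝ] G) :
    Continuous fun p : 𝓢(D, E) × 𝓢(D, F) => pairing B p.1 p.2 := by
  let pairingHom : 𝓢(D, E) →+ 𝓢(D, F) →+ 𝓢(D, G) :=
    AddMonoidHom.mk' (fun f => (pairing B f).toLinearMap.toAddMonoidHom)
      fun f₁ f₂ => by ext; simp
  refine continuous_of_continuousAt_zero₂ pairingHom ?_
    (fun f => (pairing B f).continuous.continuousAt)
    fun g => (pairing_continuous_left B g).continuousAt
  simp only [ContinuousAt, map_zero]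
  refine ((schwartz_withSeminorms ℝ D G).tendsto_nhds _ _).2 fun ⟨k, n⟩ δ hδ => ?_
  have continuous_bound : Continuous fun p : 𝓢(D, E) × 𝓢(D, F) =>
      ‖B‖ * ∑ i ∈ Finset.range (n + 1),
        n.choose i * SchwartzMap.seminorm ℝ k i p.1 * SchwartzMap.seminorm ℝ 0 (n - i) p.2 := by
    have continuous_left (i : ℕ) := (schwartz_withSeminorms ℝ D E).continuous_seminorm (k, i)
    have continuous_right (i : ℕ) := (schwartz_withSeminorms ℝ D F).continuous_seminorm (0, i)
    simp only [schwartzSeminormFamily] at continuous_left continuous_right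
    fun_prop
  have tendsto_bound := continuous_bound.tendsto (0, 0)
  simp only [map_zero, mul_zero, Finset.sum_const_zero] at tendsto_bound
  filter_upwards [tendsto_bound.eventually_lt_const hδ] with p hp
  rw [sub_zero]
  exact (seminorm_pairing_le B p.1 p.2 k n).trans_lt hp

instance : ContinuousEval 𝓢(D, E) D E where
  continuous_eval :=
    ((toBoundedContinuousFunctionCLM ℝ D E).continuous.comp continuous_fst).eval continuous_snd

lemma exists_one_add_sq_rpow_mul_norm_le {g : ℝ → 𝓢(ℝ, E)} (hg : Continuous g) (r a b : ℝ) :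
    ∃ K, ∀ τ ∈ Set.uIcc a b, ∀ ξ, (1 + ξ ^ 2) ^ r * ‖g τ ξ‖ ≤ K := by
  let weighted (τ : ℝ) := toBoundedContinuousFunctionCLM ℝ ℝ E (bracketCLM E r (g τ))
  have continuous_norm : Continuous fun τ => ‖weighted τ‖ := by fun_prop
  obtain ⟨K, hK⟩ := isCompact_uIcc.bddAbove_image continuous_norm.continuousOn
  refine ⟨K, fun τ hτ ξ => ?_⟩
  calc (1 + ξ ^ 2) ^ r * ‖g τ ξ‖ = ‖weighted τ ξ‖ := by
        rw [toBoundedContinuousFunctionCLM_apply, bracketCLM_apply, norm_smul,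
          Real.norm_of_nonneg (by positivity)]
    _ ≤ ‖weighted τ‖ := (weighted τ).norm_coe_le_norm ξ
    _ ≤ K := hK (Set.mem_image_of_mem _ hτ)

namespace IsTemperedSymbol

variable {m : ℝ → ℝ}

lemma one_add_sq_rpow (s : ℝ) : IsTemperedSymbol fun ξ => (1 + ξ ^ 2) ^ s where
  continuous := by
    refine Continuous.rpow_const (by fun_prop) fun ξ => .inl ?_
    positivity
  exists_bound := ⟨1, s, fun ξ => by rw [one_mul, abs_of_pos (by positivity)]⟩

lemma integrable_smul (hm : IsTemperedSymbol m) (g : 𝓢(ℝ, E)) :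
    Integrable fun ξ => m ξ • g ξ := by
  obtain ⟨B, r, hB⟩ := hm.exists_bound
  refine ((bracketCLM E r g).integrable.norm.const_mul B).mono'
    (hm.continuous.smul g.continuous).aestronglyMeasurable (.of_forall fun ξ => ?_)
  rw [bracketCLM_apply, norm_smul, norm_smul,
    Real.norm_of_nonneg (by positivity : 0 ≤ (1 + ξ ^ 2) ^ r), ← mul_assoc]
  gcongr
  exact hB ξ

lemma integrable_prod_smul (hm : IsTemperedSymbol m) {g : ℝ → 𝓢(ℝ, E)} (hg : Continuous g)
    (a b : ℝ) :
    Integrable (fun z : ℝ × ℝ => m z.2 • g z.1 z.2)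
      ((volume.restrict (Set.uIoc a b)).prod volume) := by
  obtain ⟨B, r, hB⟩ := hm.exists_bound
  obtain ⟨K, hK⟩ := exists_one_add_sq_rpow_mul_norm_le hg (r + 1) a b
  have continuous_integrand : Continuous fun z : ℝ × ℝ => m z.2 • g z.1 z.2 :=
    (hm.continuous.comp continuous_snd).smul ((hg.comp continuous_fst).eval continuous_snd)
  refine ((continuous_const (y := B * K)).integrableOn_uIoc.mul_prod
    integrable_inv_one_add_sq).mono' continuous_integrand.aestronglyMeasurable ?_
  have mem_uIoc : ∀ᵐ z : ℝ × ℝ ∂(volume.restrict (Set.uIoc a b)).prod volume, z.1 ∈ Set.uIoc a b :=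
    Measure.quasiMeasurePreserving_fst.ae (ae_restrict_mem measurableSet_uIoc)
  filter_upwards [mem_uIoc] with z hz
  have one_add_sq_pos : 0 < 1 + z.2 ^ 2 := by positivity
  have bound_nonneg : 0 ≤ B :=
    nonneg_of_mul_nonneg_left ((abs_nonneg _).trans (hB 0)) (by simp)
  calc ‖m z.2 • g z.1 z.2‖ ≤ B * (1 + z.2 ^ 2) ^ r * ‖g z.1 z.2‖ := by
        rw [norm_smul]
        gcongr
        exact hB z.2
    _ = B * ((1 + z.2 ^ 2) ^ (r + 1) * ‖g z.1 z.2‖) * (1 + z.2 ^ 2)⁻¹ := by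
        rw [Real.rpow_add_one one_add_sq_pos.ne']
        field_simp
    _ ≤ B * K * (1 + z.2 ^ 2)⁻¹ := by
        gcongr
        exact hK z.1 (Set.uIoc_subset_uIcc hz) z.2

end IsTemperedSymbol

end Curves

section EvolutionOnFourierSide

variable {W E : Type*} [NormedAddCommGroup W] [InnerProductSpace ℝ W] [FiniteDimensional ℝ W]
  [MeasurableSpace W] [BorelSpace W] [NormedAddCommGroup E] [NormedSpace ℂ E]
  {a b : ℝ} {V : ℝ → W → E}

lemma integrable_prod_fourierChar_smul
    (hV : Integrable (Function.uncurry V) ((volume.restrict (Set.uIoc a b)).prod volume)) (x : W) :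
    Integrable (Function.uncurry fun τ ξ => Real.fourierChar (inner ℝ ξ x) • V τ ξ)
      ((volume.restrict (Set.uIoc a b)).prod volume) := by
  refine (integrable_norm_iff ?_).1 (by simpa [Function.uncurry_def] using hV.norm)
  have continuous_char : Continuous fun z : ℝ × W => Real.fourierChar (inner ℝ z.2 x) := by fun_prop
  exact continuous_char.aestronglyMeasurable.smul hV.aestronglyMeasurable

lemma fourierInv_intervalIntegral
    (hV : Integrable (Function.uncurry V) ((volume.restrict (Set.uIoc a b)).prod volume)) (x : W) :
    𝓕⁻ (fun ξ => ∫ τ in a..b, V τ ξ) x = ∫ τ in a..b, 𝓕⁻ (V τ) x := by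
  simp only [Real.fourierInv_eq, Circle.smul_def, ← intervalIntegral.integral_smul]
  exact (intervalIntegral_integral_swap (integrable_prod_fourierChar_smul hV x)).symm

lemma intervalIntegrable_fourierInv
    (hV : Integrable (Function.uncurry V) ((volume.restrict (Set.uIoc a b)).prod volume)) (x : W) :
    IntervalIntegrable (fun τ => 𝓕⁻ (V τ) x) volume a b := by
  simp only [Real.fourierInv_eq, intervalIntegrable_iff]
  exact (integrable_prod_fourierChar_smul hV x).integral_prod_left

lemma fourier_eq_of_fourierInv_eq [CompleteSpace E] {g : W → E} (w : 𝓢(W, E)) (hg : Continuous g)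
    (hgi : Integrable g) (h : 𝓕⁻ g = w) : 𝓕 w = g := by
  have integrable_fourier : Integrable (𝓕 g) := by
    refine w.integrable.comp_neg.congr (.of_forall fun x => ?_)
    simp only [← h, Real.fourierInv_eq_fourier_neg, neg_neg]
  rw [← hg.fourier_fourierInv_eq hgi integrable_fourier, h, fourier_coe]

lemma fourier_sub_fourier_eq_intervalIntegral [CompleteSpace E] {w : ℝ → 𝓢(W, E)}
    (hab : a ≤ b) (hw : Continuous w) (hVc : Continuous (Function.uncurry V))
    (hV : Integrable (Function.uncurry V) ((volume.restrict (Set.uIoc a b)).prod volume))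
    (hderiv : ∀ t ∈ Set.Ioo a b, ∀ x, HasDerivAt (fun τ => w τ x) (𝓕⁻ (V t) x) t) (ξ : W) :
    𝓕 (w b) ξ - 𝓕 (w a) ξ = ∫ τ in a..b, V τ ξ := by
  have continuous_increment : Continuous fun ξ => ∫ τ in a..b, V τ ξ :=
    intervalIntegral.continuous_parametric_intervalIntegral_of_continuous' (by fun_prop) a b
  have integrable_increment : Integrable fun ξ => ∫ τ in a..b, V τ ξ := by
    simp only [intervalIntegral.integral_of_le hab, ← Set.uIoc_of_le hab]
    exact hV.integral_prod_right
  have invert_increment : 𝓕⁻ (fun ξ => ∫ τ in a..b, V τ ξ) = ⇑(w b - w a) := by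
    ext x
    have continuous_path : Continuous fun τ => w τ x := hw.eval continuous_const
    rw [fourierInv_intervalIntegral hV, intervalIntegral.integral_eq_sub_of_hasDerivAt_of_le hab
      continuous_path.continuousOn (fun t ht => hderiv t ht x) (intervalIntegrable_fourierInv hV x)]
    rfl
  rw [← congrFun (fourier_eq_of_fourierInv_eq _ continuous_increment integrable_increment
    invert_increment) ξ]
  exact DFunLike.congr_fun (map_sub (FourierTransform.fourierCLM ℂ 𝓢(W, E)) (w b) (w a)).symm ξ

end EvolutionOnFourierSide

section OrdinaryDifferentialInequality

variable {a b t : ℝ}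

lemma hasDerivAt_of_sub_eq_intervalIntegral {E : Type*} [NormedAddCommGroup E] [NormedSpace ℝ E]
    [CompleteSpace E] {f g : ℝ → E} (hg : Continuous g)
    (h : ∀ t ∈ Set.Icc a b, f t - f a = ∫ τ in a..t, g τ) (ht : t ∈ Set.Ioo a b) :
    HasDerivAt f (g t) t := by
  refine ((hg.integral_hasStrictDerivAt a t).hasDerivAt.const_add (f a)).congr_of_eventuallyEq ?_
  filter_upwards [Icc_mem_nhds ht.1 ht.2] with τ hτ
  rw [← h τ hτ, add_sub_cancel]

lemma le_exp_integral_mul_of_deriv_le {f f' φ : ℝ → ℝ} (hab : a ≤ b) (hφ : Continuous φ)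
    (hf : ContinuousOn f (Set.Icc a b)) (hf' : ∀ t ∈ Set.Ioo a b, HasDerivAt f (f' t) t)
    (h : ∀ t ∈ Set.Ioo a b, f' t ≤ φ t * f t) :
    f b ≤ Real.exp (∫ τ in a..b, φ τ) * f a := by
  have hasDerivAt_factor (t : ℝ) : HasDerivAt (fun t => Real.exp (-∫ τ in a..t, φ τ))
      (Real.exp (-∫ τ in a..t, φ τ) * -φ t) t :=
    (hφ.integral_hasStrictDerivAt a t).hasDerivAt.neg.exp
  have continuous_factor : Continuous fun t => Real.exp (-∫ τ in a..t, φ τ) :=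
    continuous_iff_continuousAt.2 fun t => (hasDerivAt_factor t).continuousAt
  have antitone : AntitoneOn (fun t => Real.exp (-∫ τ in a..t, φ τ) * f t) (Set.Icc a b) := by
    refine antitoneOn_of_hasDerivWithinAt_nonpos (convex_Icc a b)
      (continuous_factor.continuousOn.mul hf)
      (fun t ht => ((hasDerivAt_factor t).mul (hf' t (by simpa using ht))).hasDerivWithinAt)
      fun t ht => ?_
    have := mul_le_mul_of_nonneg_left (h t (by simpa using ht))
      (Real.exp_nonneg (-∫ τ in a..t, φ τ))
    linarith
  have decay := antitone (Set.left_mem_Icc.2 hab) (Set.right_mem_Icc.2 hab) hab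
  simp only [intervalIntegral.integral_same, neg_zero, Real.exp_zero, one_mul, Real.exp_neg]
    at decay
  exact (inv_mul_le_iff₀ (Real.exp_pos _)).1 decay

end OrdinaryDifferentialInequality

/-- The Fourier multiplier `m(D)`, with symbol `m` in Mathlib's normalisation of the frequency. -/
def fourierMul (m : ℝ → ℝ) (f : ℝ → ℂ) : ℝ → ℂ := 𝓕⁻ fun ξ => (m ξ : ℂ) * 𝓕 f ξ

/-- A curve of Schwartz functions solving `∂_t η + m(D) ∂ₓη + (ε/2) ∂ₓ(η²) = 0` pointwise on
`(0, T)`: the Whitham equation with a general dispersion symbol. -/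
structure IsWhithamSolution (m : ℝ → ℝ) (ε T : ℝ) (η : ℝ → 𝓢(ℝ, ℝ)) : Prop where
  continuous : Continuous η
  hasDerivAt : ∀ t ∈ Set.Ioo 0 T, ∀ x : ℝ, HasDerivAt (fun τ => (η τ x : ℂ))
    (-(fourierMul m (cc (deriv (η t))) x
      + (ε / 2 : ℂ) * ((deriv (fun y => η t y ^ 2) x : ℝ) : ℂ))) t

/-- The velocity `∂_t η̂` prescribed by the Whitham equation at the state `u`. -/
def spectralVelocity (m : ℝ → ℝ) (ε : ℝ) (u : 𝓢(ℝ, ℝ)) (ξ : ℝ) : ℂ :=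
  -(m ξ • hat (derivCLM ℝ ℝ u) ξ + ε • hat (advection u) ξ)

lemma continuous_advection : Continuous advection :=
  (continuous_pairing _).comp (continuous_id.prodMk (derivCLM ℝ ℝ).continuous)

lemma continuous_crossSpectrum_advection :
    Continuous fun u : 𝓢(ℝ, ℝ) => crossSpectrum u (advection u) :=
  (continuous_pairing _).comp (hat.continuous.prodMk (hat.continuous.comp continuous_advection))

lemma inner_hat_spectralVelocity (m : ℝ → ℝ) (ε : ℝ) (u : 𝓢(ℝ, ℝ)) (ξ : ℝ) :
    inner ℝ (hat u ξ) (spectralVelocity m ε u ξ) = -(ε * crossSpectrum u (advection u) ξ) := by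
  have dispersion_skew : inner ℝ (hat u ξ) (hat (derivCLM ℝ ℝ u) ξ) = 0 := by
    rw [hat_derivCLM, Complex.inner]
    simp only [Complex.mul_re, Complex.mul_im, Complex.conj_re, Complex.conj_im, Complex.re_ofNat,
      Complex.im_ofNat, Complex.ofReal_re, Complex.ofReal_im, Complex.I_re, Complex.I_im]
    ring
  rw [spectralVelocity, inner_neg_right, inner_add_right, inner_smul_right, inner_smul_right,
    dispersion_skew, mul_zero, zero_add, crossSpectrum_apply]

lemma fourierInv_hat (u : 𝓢(ℝ, ℝ)) (x : ℝ) : 𝓕⁻ (⇑(hat u)) x = u x := by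
  rw [← fourierInv_coe]
  exact DFunLike.congr_fun (FourierTransform.fourierInv_fourier_eq
    (postcompCLM Complex.ofRealCLM u : 𝓢(ℝ, ℂ))) x

lemma deriv_sq_eq_two_mul_advection (u : 𝓢(ℝ, ℝ)) (x : ℝ) :
    deriv (fun y => u y ^ 2) x = 2 * advection u x := by
  rw [((u.hasDerivAt x).fun_pow 2).deriv, advection, coe_schwartzMul, Pi.mul_apply, derivCLM_apply]
  ring

namespace IsTemperedSymbol

variable {m : ℝ → ℝ}

lemma const (c : ℝ) : IsTemperedSymbol fun _ => c where
  continuous := continuous_const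
  exists_bound := ⟨|c|, 0, by simp⟩

lemma fourierInv_spectralVelocity (hm : IsTemperedSymbol m) (ε : ℝ) (u : 𝓢(ℝ, ℝ)) (x : ℝ) :
    𝓕⁻ (spectralVelocity m ε u) x = -(fourierMul m (cc (deriv u)) x
      + (ε / 2 : ℂ) * ((deriv (fun y => u y ^ 2) x : ℝ) : ℂ)) := by
  have integrable_char_smul {f : ℝ → ℂ} (hf : Integrable f) :
      Integrable fun ξ => Real.fourierChar (inner ℝ ξ x) • f ξ := by
    simpa using (Real.fourierIntegral_convergent_iff (-x)).2 hf
  have dispersion : fourierMul m (cc (deriv u)) x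
      = 𝓕⁻ (fun ξ => m ξ • hat (derivCLM ℝ ℝ u) ξ) x := rfl
  have nonlinearity : ∫ ξ, Real.fourierChar (inner ℝ ξ x) • (ε • hat (advection u) ξ)
      = (ε / 2 : ℂ) * ((deriv (fun y => u y ^ 2) x : ℝ) : ℂ) := by
    simp only [smul_comm _ ε, integral_smul]
    rw [← Real.fourierInv_eq, fourierInv_hat, deriv_sq_eq_two_mul_advection, Complex.real_smul]
    push_cast
    ring
  rw [dispersion, ← nonlinearity, Real.fourierInv_eq, Real.fourierInv_eq, ← integral_add
    (integrable_char_smul (hm.integrable_smul _))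
    (integrable_char_smul ((const ε).integrable_smul _)), ← integral_neg]
  simp only [spectralVelocity, smul_neg, smul_add]

lemma continuous_uncurry_spectralVelocity (hm : IsTemperedSymbol m) (ε : ℝ) {η : ℝ → 𝓢(ℝ, ℝ)}
    (hη : Continuous η) :
    Continuous (Function.uncurry fun τ => spectralVelocity m ε (η τ)) := by
  have := hm.continuous
  have := continuous_advection
  unfold spectralVelocity Function.uncurry
  fun_prop

lemma integrable_prod_spectralVelocity (hm : IsTemperedSymbol m) (ε : ℝ) {η : ℝ → 𝓢(ℝ, ℝ)}
    (hη : Continuous η) (a b : ℝ) :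
    Integrable (Function.uncurry fun τ => spectralVelocity m ε (η τ))
      ((volume.restrict (Set.uIoc a b)).prod volume) :=
  ((hm.integrable_prod_smul (hat.continuous.comp ((derivCLM ℝ ℝ).continuous.comp hη)) a b).add
    ((const ε).integrable_prod_smul
      (hat.continuous.comp (continuous_advection.comp hη)) a b)).neg

end IsTemperedSymbol

lemma continuous_integral_one_add_sq_rpow_mul (s : ℝ) :
    Continuous fun g : 𝓢(ℝ, ℝ) => ∫ ξ, (1 + ξ ^ 2) ^ s * g ξ := by
  convert (integralCLM ℝ (volume : Measure ℝ)).continuous.comp (bracketCLM ℝ s).continuous using 2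
    with g
  simp only [Function.comp_apply, integralCLM_apply, bracketCLM_apply, smul_eq_mul]

lemma continuous_sobolevEnergy (s : ℝ) : Continuous (sobolevEnergy s) := by
  have continuous_self : Continuous fun u : 𝓢(ℝ, ℝ) => crossSpectrum u u :=
    (continuous_pairing _).comp (hat.continuous.prodMk hat.continuous)
  unfold sobolevEnergy
  simpa only [Function.comp_def, crossSpectrum_self] using
    (continuous_integral_one_add_sq_rpow_mul s).comp continuous_self

lemma abs_le_toReal_eLpNorm_top (u : 𝓢(ℝ, ℝ)) (x : ℝ) : |u x| ≤ (eLpNorm u ⊤ volume).toReal := by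
  have isClosed_bound : IsClosed {x | ‖u x‖ₑ ≤ eLpNorm u ⊤ volume} :=
    isClosed_le u.continuous.enorm continuous_const
  have ae_bound : ∀ᵐ x, ‖u x‖ₑ ≤ eLpNorm u ⊤ volume := by
    simpa only [eLpNorm_exponent_top] using ae_le_eLpNormEssSup
  have enorm_le : ‖u x‖ₑ ≤ eLpNorm u ⊤ volume :=
    isClosed_bound.closure_subset (Measure.dense_of_ae ae_bound x)
  have := ENNReal.toReal_mono (u.memLp ⊤ volume).eLpNorm_ne_top enorm_le
  rwa [toReal_enorm] at this

lemma continuous_toReal_eLpNorm_top :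
    Continuous fun u : 𝓢(ℝ, ℝ) => (eLpNorm u ⊤ volume).toReal := by
  convert (toLpCLM ℝ ℝ ⊤ (volume : Measure ℝ)).continuous.norm using 2 with u
  rw [toLpCLM_apply, norm_toLp]

lemma HsNorm_cc_sq (s : ℝ) (u : 𝓢(ℝ, ℝ)) :
    HsNorm s (cc u) ^ 2 = ENNReal.ofReal (sobolevEnergy s u) := by
  have jap_rpow_sq (ξ : ℝ) : (jap ξ ^ s) ^ 2 = (1 + ξ ^ 2) ^ s := by
    rw [jap, ← Real.rpow_mul (by positivity), ← Real.rpow_mul_natCast (by positivity)]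
    congr 1
    push_cast
    ring
  rw [HsNorm, sobolevEnergy, eLpNorm_eq_lintegral_rpow_enorm_toReal (by simp) (by simp),
    ofReal_integral_eq_lintegral_ofReal (integrable_one_add_sq_rpow_mul_norm_hat_sq s u)
      (.of_forall fun ξ => by positivity), ← ENNReal.rpow_mul_natCast]
  simp only [ENNReal.toReal_ofNat, Nat.cast_ofNat, one_div, inv_mul_cancel₀, ne_eq,
    OfNat.ofNat_ne_zero, not_false_eq_true, ENNReal.rpow_one, ENNReal.rpow_ofNat]
  refine lintegral_congr fun ξ => ?_
  rw [← enorm_pow, mul_pow, jap_rpow_sq, coe_hat, Real.enorm_of_nonneg (by positivity)]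

namespace IsWhithamSolution

variable {m : ℝ → ℝ} {ε T t : ℝ} {η : ℝ → 𝓢(ℝ, ℝ)}

lemma hat_sub_hat_eq_intervalIntegral (hη : IsWhithamSolution m ε T η) (hm : IsTemperedSymbol m)
    (ht : t ∈ Set.Icc 0 T) (ξ : ℝ) :
    hat (η t) ξ - hat (η 0) ξ = ∫ τ in (0)..t, spectralVelocity m ε (η τ) ξ := by
  refine fourier_sub_fourier_eq_intervalIntegral (w := fun τ => postcompCLM Complex.ofRealCLM (η τ))
    ht.1 ((postcompCLM Complex.ofRealCLM).continuous.comp hη.continuous)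
    (hm.continuous_uncurry_spectralVelocity ε hη.continuous)
    (hm.integrable_prod_spectralVelocity ε hη.continuous 0 t) (fun τ hτ x => ?_) ξ
  rw [hm.fourierInv_spectralVelocity]
  exact hη.hasDerivAt τ ⟨hτ.1, hτ.2.trans_le ht.2⟩ x

lemma norm_hat_sq_sub_norm_hat_sq_eq_intervalIntegral (hη : IsWhithamSolution m ε T η)
    (hm : IsTemperedSymbol m) (ht : t ∈ Set.Icc 0 T) (ξ : ℝ) :
    ‖hat (η t) ξ‖ ^ 2 - ‖hat (η 0) ξ‖ ^ 2
      = ∫ τ in (0)..t, -(2 * ε) * crossSpectrum (η τ) (advection (η τ)) ξ := by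
  have continuous_velocity : Continuous fun τ => spectralVelocity m ε (η τ) ξ :=
    (hm.continuous_uncurry_spectralVelocity ε hη.continuous).comp (.prodMk_left ξ)
  have continuous_hat : Continuous fun τ => hat (η τ) ξ :=
    (hat.continuous.comp hη.continuous).eval continuous_const
  have continuous_rate : Continuous fun τ => crossSpectrum (η τ) (advection (η τ)) ξ :=
    (continuous_crossSpectrum_advection.comp hη.continuous).eval continuous_const
  symm
  refine intervalIntegral.integral_eq_sub_of_hasDerivAt_of_le ht.1
    (continuous_hat.norm.pow 2).continuousOn (fun τ hτ => ?_)
    ((continuous_rate.const_mul _).intervalIntegrable 0 t)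
  have hasDerivAt_hat : HasDerivAt (fun τ => hat (η τ) ξ) (spectralVelocity m ε (η τ) ξ) τ :=
    hasDerivAt_of_sub_eq_intervalIntegral continuous_velocity
      (fun t ht => hη.hat_sub_hat_eq_intervalIntegral hm ht ξ) ⟨hτ.1, hτ.2.trans_le ht.2⟩
  refine hasDerivAt_hat.norm_sq.congr_deriv ?_
  rw [inner_hat_spectralVelocity]
  ring

lemma sobolevEnergy_sub_sobolevEnergy_eq_intervalIntegral (hη : IsWhithamSolution m ε T η)
    (hm : IsTemperedSymbol m) (ht : t ∈ Set.Icc 0 T) (s : ℝ) :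
    sobolevEnergy s (η t) - sobolevEnergy s (η 0) = ∫ τ in (0)..t,
      -(2 * ε) * ∫ ξ, (1 + ξ ^ 2) ^ s * crossSpectrum (η τ) (advection (η τ)) ξ := by
  have integrable_rate := (IsTemperedSymbol.one_add_sq_rpow s).integrable_prod_smul
    (continuous_crossSpectrum_advection.comp hη.continuous) 0 t
  calc sobolevEnergy s (η t) - sobolevEnergy s (η 0)
      = ∫ ξ, (1 + ξ ^ 2) ^ s * (‖hat (η t) ξ‖ ^ 2 - ‖hat (η 0) ξ‖ ^ 2) := by
        simp only [mul_sub]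
        exact (integral_sub (integrable_one_add_sq_rpow_mul_norm_hat_sq s _)
          (integrable_one_add_sq_rpow_mul_norm_hat_sq s _)).symm
    _ = -(2 * ε) * ∫ ξ, ∫ τ in (0)..t,
          (1 + ξ ^ 2) ^ s * crossSpectrum (η τ) (advection (η τ)) ξ := by
        simp only [hη.norm_hat_sq_sub_norm_hat_sq_eq_intervalIntegral hm ht,
          intervalIntegral.integral_const_mul, ← integral_const_mul, mul_left_comm]
    _ = _ := by
        rw [intervalIntegral.integral_const_mul, ← intervalIntegral_integral_swap integrable_rate]

lemma hasDerivAt_sobolevEnergy (hη : IsWhithamSolution m ε T η)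
    (hm : IsTemperedSymbol m) (ht : t ∈ Set.Ioo 0 T) (s : ℝ) :
    HasDerivAt (fun τ => sobolevEnergy s (η τ))
      (-(2 * ε) * ∫ ξ, (1 + ξ ^ 2) ^ s * crossSpectrum (η t) (advection (η t)) ξ) t := by
  have continuous_rate : Continuous fun τ =>
      ∫ ξ, (1 + ξ ^ 2) ^ s * crossSpectrum (η τ) (advection (η τ)) ξ :=
    (continuous_integral_one_add_sq_rpow_mul s).comp
      (continuous_crossSpectrum_advection.comp hη.continuous)
  exact hasDerivAt_of_sub_eq_intervalIntegral (continuous_rate.const_mul (-(2 * ε)))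
    (fun t ht => hη.sobolevEnergy_sub_sobolevEnergy_eq_intervalIntegral hm ht s) ht

lemma sobolevEnergy_le (hη : IsWhithamSolution m ε T η) (hm : IsTemperedSymbol m)
    (ht : t ∈ Set.Icc 0 T) {s C : ℝ}
    (hC : ∀ (u : 𝓢(ℝ, ℝ)) (M : ℝ), (∀ x, |deriv u x| ≤ M) →
      |∫ ξ, (1 + ξ ^ 2) ^ s * crossSpectrum u (advection u) ξ| ≤ C * M * sobolevEnergy s u) :
    sobolevEnergy s (η t)
      ≤ Real.exp (2 * C * |ε| * ∫ τ in (0)..t, (eLpNorm (deriv (η τ)) ⊤ volume).toReal)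
        * sobolevEnergy s (η 0) := by
  have coe_derivCLM (u : 𝓢(ℝ, ℝ)) : deriv u = derivCLM ℝ ℝ u := rfl
  have continuous_slope : Continuous fun τ => (eLpNorm (deriv (η τ)) ⊤ volume).toReal := by
    simp only [coe_derivCLM]
    exact continuous_toReal_eLpNorm_top.comp ((derivCLM ℝ ℝ).continuous.comp hη.continuous)
  have continuous_energy : Continuous fun τ => sobolevEnergy s (η τ) :=
    (continuous_sobolevEnergy s).comp hη.continuous
  rw [← intervalIntegral.integral_const_mul]
  refine le_exp_integral_mul_of_deriv_le ht.1 (continuous_slope.const_mul _)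
    continuous_energy.continuousOn
    (fun τ hτ => hη.hasDerivAt_sobolevEnergy hm ⟨hτ.1, hτ.2.trans_le ht.2⟩ s) fun τ _ => ?_
  calc -(2 * ε) * ∫ ξ, (1 + ξ ^ 2) ^ s * crossSpectrum (η τ) (advection (η τ)) ξ
      ≤ 2 * |ε| * |∫ ξ, (1 + ξ ^ 2) ^ s * crossSpectrum (η τ) (advection (η τ)) ξ| := by
        refine (le_abs_self _).trans_eq ?_
        rw [abs_mul, abs_neg, abs_mul, abs_two]
    _ ≤ 2 * |ε| * (C * (eLpNorm (deriv (η τ)) ⊤ volume).toReal * sobolevEnergy s (η τ)) := by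
        gcongr
        exact hC _ _ (abs_le_toReal_eLpNorm_top (derivCLM ℝ ℝ (η τ)))
    _ = _ := by ring

end IsWhithamSolution

lemma hasDerivAt_tanh (x : ℝ) : HasDerivAt Real.tanh (1 - Real.tanh x ^ 2) x := by
  have tanh_eq : Real.tanh = fun x => Real.sinh x / Real.cosh x :=
    funext Real.tanh_eq_sinh_div_cosh
  rw [tanh_eq]
  refine ((Real.hasDerivAt_sinh x).div (Real.hasDerivAt_cosh x)
    (Real.cosh_pos x).ne').congr_deriv ?_
  have := (Real.cosh_pos x).ne'
  field_simp

lemma abs_tanh_le_abs (x : ℝ) : |Real.tanh x| ≤ |x| := by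
  have abs_deriv_le (y : ℝ) : ‖1 - Real.tanh y ^ 2‖ ≤ 1 := by
    rw [Real.norm_of_nonneg (sub_nonneg.2 (Real.tanh_sq_lt_one y).le)]
    linarith [sq_nonneg (Real.tanh y)]
  simpa using Convex.norm_image_sub_le_of_norm_hasDerivWithin_le (s := Set.univ) (x := 0) (y := x)
    (fun y _ => (hasDerivAt_tanh y).hasDerivWithinAt) (fun y _ => abs_deriv_le y) convex_univ
    trivial trivial

lemma continuous_Tsymb {μ : ℝ} (hμ : 0 < μ) : Continuous (Tsymb μ) := by
  have continuous_slope : Continuous (dslope Real.tanh 0) := by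
    refine continuous_iff_continuousAt.2 fun x => ?_
    rcases eq_or_ne x 0 with rfl | hx
    · exact continuousAt_dslope_same.2 (hasDerivAt_tanh 0).differentiableAt
    · exact (continuousAt_dslope_of_ne hx).2 (hasDerivAt_tanh x).continuousAt
  have Tsymb_eq : Tsymb μ = fun ξ => dslope Real.tanh 0 (√μ * |ξ|) := by
    ext ξ
    rcases eq_or_ne ξ 0 with rfl | hξ
    · simp [Tsymb, dslope_same, (hasDerivAt_tanh 0).deriv]
    · have : √μ * |ξ| ≠ 0 := by positivity
      rw [Tsymb, if_neg hξ, dslope_of_ne _ this, slope_def_field, Real.tanh_zero, sub_zero,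
        sub_zero]
  rw [Tsymb_eq]
  fun_prop

lemma Tsymb_le_one (μ ξ : ℝ) : Tsymb μ ξ ≤ 1 := by
  unfold Tsymb
  split_ifs
  · exact le_rfl
  · have nonneg : 0 ≤ √μ * |ξ| := by positivity
    exact div_le_one_of_le₀ ((le_abs_self _).trans ((abs_tanh_le_abs _).trans_eq
      (abs_of_nonneg nonneg))) nonneg

lemma isTemperedSymbol_sqrt_Tsymb {μ : ℝ} (hμ : 0 < μ) :
    IsTemperedSymbol fun ξ => √(Tsymb μ ξ) where
  continuous := (continuous_Tsymb hμ).sqrt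
  exists_bound := ⟨1, 0, fun ξ => by
    simpa [abs_of_nonneg (Real.sqrt_nonneg _)] using Tsymb_le_one μ ξ⟩

theorem whitham_gronwall_bound_general {s : ℝ} (hs : 1 < s) :
    ∃ c : ℝ, 0 < c ∧ ∀ m, IsTemperedSymbol m → ∀ ε T η, IsWhithamSolution m ε T η →
      ∀ t ∈ Set.Icc 0 T, HsNorm s (cc (η t)) ^ 2
        ≤ ENNReal.ofReal (Real.exp (c * |ε| *
            ∫ τ in (0 : ℝ)..t, (eLpNorm (deriv (η τ)) ⊤ volume).toReal))
          * HsNorm s (cc (η 0)) ^ 2 := by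
  obtain ⟨C, C_pos, transport_le⟩ := (isTransportWeight_one_add_sq_rpow hs).exists_pos_bound
  refine ⟨2 * C, by positivity, fun m hm ε T η hη t ht => ?_⟩
  rw [HsNorm_cc_sq, HsNorm_cc_sq, ← ENNReal.ofReal_mul (Real.exp_nonneg _)]
  exact ENNReal.ofReal_le_ofReal (hη.sobolevEnergy_le hm ht transport_le)

/-- Grönwall-type energy bound for the Whitham equation: for `s > 3/2`,
`ε, μ ∈ (0,1]`, there is `c = c(s)` such that any Schwartz-valued `C¹`-in-time solution of
`∂_t η + √T_μ(D) ∂_x η + (ε/2) ∂_x(η²) = 0` on `[0,T]` with `η(0) = η₀` satisfies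
`‖η(t)‖_{H^s}² ≤ exp(c ε ∫_0^t ‖∂_x η(τ)‖_{L^∞} dτ) ‖η₀‖_{H^s}²` for all `t ∈ [0,T]`. -/
theorem whitham_gronwall_bound (s : ℝ) (hs : 3 / 2 < s) :
    ∃ c : ℝ, 0 < c ∧
      ∀ ε μ : ℝ, 0 < ε → ε ≤ 1 → 0 < μ → μ ≤ 1 →
        ∀ T : ℝ, 0 < T →
          ∀ η : ℝ → 𝓢(ℝ, ℝ), Continuous η →
            -- the Whitham equation `∂_t η = −(√T_μ(D) ∂_x η + (ε/2) ∂_x(η²))` on `[0,T]`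
            (∀ t ∈ Set.Icc (0 : ℝ) T, ∀ x : ℝ,
              HasDerivAt (fun τ => ((η τ x : ℝ) : ℂ))
                (-(sqrtTmul μ (cc (deriv (⇑(η t)))) x +
                    (ε / 2 : ℂ) * ((deriv (fun y => (η t y) ^ 2) x : ℝ) : ℂ))) t) →
            ∀ t ∈ Set.Icc (0 : ℝ) T,
              HsNorm s (cc ⇑(η t)) ^ 2
                ≤ ENNReal.ofReal
                    (Real.exp (c * ε *
                      ∫ τ in (0 : ℝ)..t, (eLpNorm (deriv (⇑(η τ))) ⊤ volume).toReal)) *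
                  HsNorm s (cc ⇑(η 0)) ^ 2 := by
  obtain ⟨c, c_pos, bound⟩ := whitham_gronwall_bound_general (s := s) (by linarith)
  refine ⟨c, c_pos, fun ε μ hε _ hμ _ T _ η hη hderiv t ht => ?_⟩
  simpa only [abs_of_pos hε] using bound _ (isTemperedSymbol_sqrt_Tsymb hμ) ε T η
    ⟨hη, fun t ht => hderiv t (Set.Ioo_subset_Icc_self ht)⟩ t ht
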